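/- arXiv:0906.1637 — 7 statements merged into one kernel-verified Lean document; each statement's English description precedes it below -/
import Mathlib

section
/- For every arrival sequence, the scalar 'optimist' system (which resets to W_opt = g(p∞) on every arrival), the exact system (which applies g on every arrival), and the 'pessimist' system (which resets to 𝓘⁻¹ on every arrival), all three applying h in the absence of arrivals and all three started at the same initial value p₀ ≥ p∞, satisfy P_opt(k) ≤ P(k) ≤ P_pess(k) for all k. -/
/-- Measurement-update map `g(p) = ((a²p + Q)⁻¹ + 𝓘)⁻¹`. -/
noncomputable def gMap (a Q I p : ℝ) : ℝ := ((a ^ 2 * p + Q)⁻¹ + I)⁻¹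

/-- Time-update map `h(p) = a²p + Q`. -/
def hMap (a Q p : ℝ) : ℝ := a ^ 2 * p + Q

/-!
The time update `h` is monotone, so two systems that both apply `h` between arrivals stay ordered as
soon as their values on arrivals are. Since `g ≤ h`, the inequality `p∞ ≤ g(p∞)` also gives
`p∞ ≤ h(p∞)`: the constant sequence `p∞` is a subsolution of the exact recursion, hence stays below
the exact system. On `[p∞, ∞)` one has `g(p∞) ≤ g(p) ≤ 𝓘⁻¹`, which orders the values on arrivals of
the three systems.
-/

theorem le_of_switched_recursion {α : Type*} [Preorder α] {h : α → α} (hh : Monotone h)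
    {s : ℕ → Bool} {r r' u v : ℕ → α} (h₀ : u 0 ≤ v 0)
    (hr : ∀ k, u k ≤ v k → r k ≤ r' k)
    (hu : ∀ k, u (k + 1) ≤ if s k then r k else h (u k))
    (hv : ∀ k, (if s k then r' k else h (v k)) ≤ v (k + 1)) (k : ℕ) :
    u k ≤ v k := by
  induction k with
  | zero => exact h₀
  | succ k ih =>
    calc u (k + 1) ≤ if s k then r k else h (u k) := hu k
      _ ≤ if s k then r' k else h (v k) := by
        split_ifs
        exacts [hr k ih, hh ih]
      _ ≤ v (k + 1) := hv k

theorem hMap_monotone (a Q : ℝ) : Monotone (hMap a Q) := fun p q hpq => by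
  unfold hMap
  gcongr

section gMap

variable {a Q I p : ℝ}

theorem gMap_le_hMap (hI : 0 ≤ I) (hp : 0 < hMap a Q p) : gMap a Q I p ≤ hMap a Q p :=
  inv_le_of_inv_le₀ hp (le_add_of_nonneg_right hI)

theorem gMap_le_inv (hI : 0 < I) (hp : 0 ≤ hMap a Q p) : gMap a Q I p ≤ I⁻¹ :=
  inv_anti₀ hI (le_add_of_nonneg_left (inv_nonneg.mpr hp))

theorem gMap_monotoneOn (hI : 0 ≤ I) : MonotoneOn (gMap a Q I) {p | 0 < hMap a Q p} := by
  intro p (hp : 0 < hMap a Q p) q (hq : 0 < hMap a Q q) hpq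
  have h_inv : (hMap a Q q)⁻¹ ≤ (hMap a Q p)⁻¹ := inv_anti₀ hp (hMap_monotone a Q hpq)
  exact inv_anti₀ (add_pos_of_pos_of_nonneg (inv_pos.mpr hq) hI) (add_le_add_left h_inv I)

end gMap

theorem lgb_optimist_le_exact_le_pessimist_general
    {a Q I pinf : ℝ} (hI : 0 < I)
    (hpos : 0 < hMap a Q pinf) (hpinf : pinf ≤ gMap a Q I pinf)
    {s : ℕ → Bool} {Popt P Ppess : ℕ → ℝ}
    (hP0 : pinf ≤ P 0) (hPopt0 : Popt 0 ≤ P 0) (hPpess0 : P 0 ≤ Ppess 0)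
    (hPopt : ∀ k, Popt (k + 1) = if s k then gMap a Q I pinf else hMap a Q (Popt k))
    (hP : ∀ k, P (k + 1) = if s k then gMap a Q I (P k) else hMap a Q (P k))
    (hPpess : ∀ k, Ppess (k + 1) = if s k then I⁻¹ else hMap a Q (Ppess k)) (k : ℕ) :
    Popt k ≤ P k ∧ P k ≤ Ppess k := by
  have h_mono := hMap_monotone a Q
  have hMap_pos {p : ℝ} (hp : pinf ≤ p) : 0 < hMap a Q p := hpos.trans_le (h_mono hp)
  have gMap_pinf_le {p : ℝ} (hp : pinf ≤ p) : gMap a Q I pinf ≤ gMap a Q I p :=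
    gMap_monotoneOn hI.le hpos (hMap_pos hp) hp
  have pinf_subsolution (k : ℕ) : pinf ≤ if s k then gMap a Q I pinf else hMap a Q pinf := by
    split_ifs
    exacts [hpinf, hpinf.trans (gMap_le_hMap hI.le hpos)]
  have pinf_le_P : ∀ k, pinf ≤ P k :=
    le_of_switched_recursion h_mono hP0 (fun _ => gMap_pinf_le) pinf_subsolution
      fun k => (hP k).ge
  exact ⟨le_of_switched_recursion h_mono hPopt0 (fun k _ => gMap_pinf_le (pinf_le_P k))
      (fun k => (hPopt k).le) (fun k => (hP k).ge) k,
    le_of_switched_recursion h_mono hPpess0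
      (fun k _ => gMap_le_inv hI (hMap_pos (pinf_le_P k)).le)
      (fun k => (hP k).le) (fun k => (hPpess k).ge) k⟩

/-- For every arrival sequence `s`, the "optimist" system
(resetting to `g(p∞)` on arrivals), the exact system (applying `g` on
arrivals) and the "pessimist" system (resetting to `𝓘⁻¹` on arrivals), all
applying `h` in the absence of arrivals and all started at `p₀ ≥ p∞`, satisfy
`P_opt(k) ≤ P(k) ≤ P_pess(k)` for all `k`. -/
theorem lgb_optimist_le_exact_le_pessimist
    (a Q I pinf p₀ : ℝ)
    (ha : 1 < a) (hQ : 0 ≤ Q) (hI : 0 < I)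
    (hpinf : 0 < pinf) (hfix : gMap a Q I pinf = pinf) (hp₀ : pinf ≤ p₀)
    (s : ℕ → Bool)
    (Popt P Ppess : ℕ → ℝ)
    (hPopt0 : Popt 0 = p₀) (hP0 : P 0 = p₀) (hPpess0 : Ppess 0 = p₀)
    (hPopt : ∀ k, Popt (k + 1) =
      if s k then gMap a Q I pinf else hMap a Q (Popt k))
    (hP : ∀ k, P (k + 1) =
      if s k then gMap a Q I (P k) else hMap a Q (P k))
    (hPpess : ∀ k, Ppess (k + 1) =
      if s k then I⁻¹ else hMap a Q (Ppess k)) :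
    ∀ k, Popt k ≤ P k ∧ P k ≤ Ppess k := by
  have hpos : 0 < hMap a Q pinf := by unfold hMap; positivity
  exact lgb_optimist_le_exact_le_pessimist_general hI hpos hfix.ge (hP0 ▸ hp₀)
    (hPopt0.trans hP0.symm).le (hP0.trans hPpess0.symm).le hPopt hP hPpess
end

section
/- Let a² > 1, W > 0, Q ≥ 0, γ̄ ∈ (0,1), and set f(j) = a^{2j}·W + Q·(a^{2j} − 1)/(a² − 1) for j ∈ ℕ. Then the series ∑_{j=0}^∞ γ̄·(1−γ̄)^j·f(j) converges if and only if a²·(1−γ̄) < 1, and in that case its sum equals γ̄·(W + Q/(a² − 1))/(1 − a²·(1−γ̄)) − Q/(a² − 1). -/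
/-!
Since `-Q/(a² - 1)` is the fixed point of the covariance recursion `x ↦ a² x + Q`, the covariance
is `f(j) = (W + Q/(a² - 1)) a^{2j} - Q/(a² - 1)`. The series is therefore a difference of two
geometric series, of ratios `a² (1 - γ)` and `1 - γ`. The second one always converges, and the
coefficient of the first one vanishes only when `W` is itself the fixed point, which
`W > 0 ≥ -Q/(a² - 1)` rules out; so the series converges exactly when the first one does.
-/

section GeometricDifference

variable {K : Type*} [NormedDivisionRing K] {q r : K}

theorem hasSum_const_mul_geometric_sub (C D : K) (hq : ‖q‖ < 1) (hr : ‖r‖ < 1) :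
    HasSum (fun j : ℕ => C * q ^ j - D * r ^ j) (C * (1 - q)⁻¹ - D * (1 - r)⁻¹) :=
  ((hasSum_geometric_of_norm_lt_one hq).mul_left C).sub
    ((hasSum_geometric_of_norm_lt_one hr).mul_left D)

theorem summable_const_mul_geometric_sub_iff {C : K} (D : K) (hC : C ≠ 0) (hr : ‖r‖ < 1) :
    Summable (fun j : ℕ => C * q ^ j - D * r ^ j) ↔ ‖q‖ < 1 := by
  have hD : Summable (fun j : ℕ => D * r ^ j) :=
    (summable_geometric_iff_norm_lt_one.2 hr).mul_left D
  calc Summable (fun j : ℕ => C * q ^ j - D * r ^ j)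
      ↔ Summable (fun j : ℕ => C * q ^ j) :=
        summable_iff_of_summable_sub (by simpa only [sub_sub_cancel_left] using hD.neg)
    _ ↔ Summable (fun j : ℕ => q ^ j) := summable_mul_left_iff hC
    _ ↔ ‖q‖ < 1 := summable_geometric_iff_norm_lt_one

end GeometricDifference

theorem weighted_covariance_eq_geometric_sub {K : Type*} [Field K] (a W Q γ r : K) (j : ℕ) :
    γ * r ^ j * (a ^ (2 * j) * W + Q * (a ^ (2 * j) - 1) / (a ^ 2 - 1))
      = γ * (W + Q / (a ^ 2 - 1)) * (a ^ 2 * r) ^ j - γ * (Q / (a ^ 2 - 1)) * r ^ j := by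
  rw [mul_pow, pow_mul]
  ring

theorem add_div_sub_one_ne_zero_of_mul_add_ne {K : Type*} [Field K] {A W Q : K}
    (hA : A ≠ 1) (hW : A * W + Q ≠ W) : W + Q / (A - 1) ≠ 0 := by
  have hA' : A - 1 ≠ 0 := sub_ne_zero.2 hA
  contrapose! hW
  field_simp at hW
  linear_combination hW

theorem lgb_geometric_series_covariance_general {K : Type*} [NormedField K] {a W Q γ : K}
    (ha : a ^ 2 ≠ 1) (hW : a ^ 2 * W + Q ≠ W) (hγ : ‖1 - γ‖ < 1) :
    (Summable (fun j : ℕ =>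
        γ * (1 - γ) ^ j * (a ^ (2 * j) * W + Q * (a ^ (2 * j) - 1) / (a ^ 2 - 1)))
      ↔ ‖a ^ 2 * (1 - γ)‖ < 1)
    ∧ (‖a ^ 2 * (1 - γ)‖ < 1 →
        ∑' j : ℕ,
            γ * (1 - γ) ^ j * (a ^ (2 * j) * W + Q * (a ^ (2 * j) - 1) / (a ^ 2 - 1))
          = γ * (W + Q / (a ^ 2 - 1)) / (1 - a ^ 2 * (1 - γ)) - Q / (a ^ 2 - 1)) := by
  have hγ0 : γ ≠ 0 := by
    rintro rfl
    simp at hγ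
  have hC : γ * (W + Q / (a ^ 2 - 1)) ≠ 0 :=
    mul_ne_zero hγ0 (add_div_sub_one_ne_zero_of_mul_add_ne ha hW)
  simp only [weighted_covariance_eq_geometric_sub]
  refine ⟨summable_const_mul_geometric_sub_iff _ hC hγ, fun hratio => ?_⟩
  rw [(hasSum_const_mul_geometric_sub _ _ hratio hγ).tsum_eq, sub_sub_cancel, ← div_eq_mul_inv,
    mul_right_comm γ _ γ⁻¹, mul_inv_cancel₀ hγ0, one_mul]

/-- For `a² > 1`, `W > 0`, `Q ≥ 0`, `γ̄ ∈ (0,1)` and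
`f(j) = a^{2j}·W + Q·(a^{2j} − 1)/(a² − 1)`, the series
`∑ⱼ γ̄·(1−γ̄)ʲ·f(j)` converges iff `a²·(1−γ̄) < 1`, in which case its sum is
`γ̄·(W + Q/(a² − 1))/(1 − a²·(1−γ̄)) − Q/(a² − 1)`. -/
theorem lgb_geometric_series_covariance
    (a W Q γ : ℝ) (ha : 1 < a ^ 2) (hW : 0 < W) (hQ : 0 ≤ Q)
    (hγ : γ ∈ Set.Ioo (0 : ℝ) 1) :
    (Summable (fun j : ℕ =>
        γ * (1 - γ) ^ j * (a ^ (2 * j) * W + Q * (a ^ (2 * j) - 1) / (a ^ 2 - 1)))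
      ↔ a ^ 2 * (1 - γ) < 1)
    ∧ (a ^ 2 * (1 - γ) < 1 →
        ∑' j : ℕ,
            γ * (1 - γ) ^ j * (a ^ (2 * j) * W + Q * (a ^ (2 * j) - 1) / (a ^ 2 - 1))
          = γ * (W + Q / (a ^ 2 - 1)) / (1 - a ^ 2 * (1 - γ)) - Q / (a ^ 2 - 1)) := by
  have hγ_norm : ‖1 - γ‖ < 1 := by
    rw [Real.norm_of_nonneg (by linarith [hγ.2])]
    linarith [hγ.1]
  have hratio : 0 ≤ a ^ 2 * (1 - γ) := mul_nonneg (sq_nonneg a) (by linarith [hγ.2])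
  have hW_ne : a ^ 2 * W + Q ≠ W :=
    ((lt_mul_of_one_lt_left hW ha).trans_le (le_add_of_nonneg_right hQ)).ne'
  simpa only [Real.norm_of_nonneg hratio] using
    lgb_geometric_series_covariance_general ha.ne' hW_ne hγ_norm
end

section
/- Let a² > 1, W > 0, Q ≥ 0, γ̄ ∈ (0,1), and set f(j) = a^{2j}·W + Q·(a^{2j} − 1)/(a² − 1) for j ∈ ℕ. Then the series ∑_{j=0}^∞ γ̄·(1−γ̄)^j·√(f(j)) converges if and only if |a|·(1−γ̄) < 1. -/
/-!
Write `f j` for the covariance. Keeping only its first term gives `√(f j) ≥ |a| ^ j * √W`, so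
convergence forces that of the geometric series of ratio `|a| * |1 - γ|`. Conversely `f j` is a sum
of `j + 1` terms, each at most a constant times `ρ ^ (2 * j)` with `ρ = max |a| 1`. Hence `√(f j)`
is at most a constant times `(j + 1) * ρ ^ j`, and the linear factor does not affect the radius of
convergence.
-/

/-- The covariance after `j` steps without observations, starting from `W`. Keeping the geometric
sum unevaluated makes the definition meaningful also when `a ^ 2 = 1`. -/
noncomputable def openLoopCovariance (a W Q : ℝ) (j : ℕ) : ℝ :=
  a ^ (2 * j) * W + ∑ i ∈ Finset.range j, a ^ (2 * i) * Q

section openLoopCovariance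

variable {a r W Q ρ : ℝ}

theorem openLoopCovariance_eq_of_sq_ne_one (ha : a ^ 2 ≠ 1) (W Q : ℝ) (j : ℕ) :
    openLoopCovariance a W Q j =
      a ^ (2 * j) * W + Q * (a ^ (2 * j) - 1) / (a ^ 2 - 1) := by
  simp only [openLoopCovariance, ← Finset.sum_mul, pow_mul, geom_sum_eq ha]
  ring

theorem pow_mul_le_openLoopCovariance (hQ : 0 ≤ Q) (a W : ℝ) (j : ℕ) :
    a ^ (2 * j) * W ≤ openLoopCovariance a W Q j :=
  le_add_of_nonneg_right <| Finset.sum_nonneg fun i _ =>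
    mul_nonneg ((even_two_mul i).pow_nonneg a) hQ

theorem openLoopCovariance_le (hW : 0 ≤ W) (hQ : 0 ≤ Q) (hρ : 1 ≤ ρ) (haρ : |a| ≤ ρ) (j : ℕ) :
    openLoopCovariance a W Q j ≤ (j + 1) * (ρ ^ (2 * j) * (W + Q)) := by
  have hpow {i : ℕ} (hij : i ≤ j) : a ^ (2 * i) ≤ ρ ^ (2 * j) :=
    calc a ^ (2 * i) = |a| ^ (2 * i) := ((even_two_mul i).pow_abs a).symm
      _ ≤ ρ ^ (2 * i) := by gcongr
      _ ≤ ρ ^ (2 * j) := by gcongr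
  have hfirst : a ^ (2 * j) * W ≤ ρ ^ (2 * j) * (W + Q) :=
    mul_le_mul (hpow le_rfl) (le_add_of_nonneg_right hQ) hW (by positivity)
  have hnoise : ∑ i ∈ Finset.range j, a ^ (2 * i) * Q ≤ j * (ρ ^ (2 * j) * (W + Q)) := by
    rw [← nsmul_eq_mul]
    refine (Finset.sum_le_card_nsmul _ _ _ fun i hi => ?_).trans_eq (by rw [Finset.card_range])
    exact mul_le_mul (hpow (Finset.mem_range.mp hi).le) (le_add_of_nonneg_left hW) hQ
      (by positivity)
  rw [openLoopCovariance]
  linarith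

theorem abs_pow_mul_sqrt_le_sqrt_openLoopCovariance (hQ : 0 ≤ Q) (a W : ℝ) (j : ℕ) :
    |a| ^ j * √W ≤ √(openLoopCovariance a W Q j) :=
  calc |a| ^ j * √W = √(a ^ (2 * j) * W) := by
        rw [Real.sqrt_mul ((even_two_mul j).pow_nonneg a), mul_comm 2 j, pow_mul,
          Real.sqrt_sq_eq_abs, abs_pow]
    _ ≤ √(openLoopCovariance a W Q j) :=
        Real.sqrt_le_sqrt (pow_mul_le_openLoopCovariance hQ a W j)

theorem sqrt_openLoopCovariance_le (hW : 0 ≤ W) (hQ : 0 ≤ Q) (hρ : 1 ≤ ρ) (haρ : |a| ≤ ρ)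
    (j : ℕ) : √(openLoopCovariance a W Q j) ≤ (j + 1) * ρ ^ j * √(W + Q) := by
  have hj : (j + 1 : ℝ) ≤ (j + 1) ^ 2 := le_self_pow₀ (by simp) two_ne_zero
  calc √(openLoopCovariance a W Q j)
      ≤ √((j + 1) * (ρ ^ (2 * j) * (W + Q))) :=
        Real.sqrt_le_sqrt (openLoopCovariance_le hW hQ hρ haρ j)
    _ ≤ √((j + 1) ^ 2 * (ρ ^ (2 * j) * (W + Q))) := by gcongr
    _ = √(((j + 1) * ρ ^ j) ^ 2 * (W + Q)) := by ring_nf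
    _ = (j + 1) * ρ ^ j * √(W + Q) := by
        rw [Real.sqrt_mul (sq_nonneg _), Real.sqrt_sq (by positivity)]

theorem abs_mul_abs_lt_one_of_summable_pow_mul_sqrt_openLoopCovariance (hW : 0 < W) (hQ : 0 ≤ Q)
    (h : Summable fun j : ℕ => r ^ j * √(openLoopCovariance a W Q j)) : |a| * |r| < 1 := by
  have hbound (j : ℕ) : (|a| * |r|) ^ j * √W ≤ |r ^ j * √(openLoopCovariance a W Q j)| :=
    calc (|a| * |r|) ^ j * √W = |r| ^ j * (|a| ^ j * √W) := by ring
      _ ≤ |r| ^ j * √(openLoopCovariance a W Q j) := by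
          gcongr
          exact abs_pow_mul_sqrt_le_sqrt_openLoopCovariance hQ a W j
      _ = |r ^ j * √(openLoopCovariance a W Q j)| := by
          rw [abs_mul, abs_pow, abs_of_nonneg (Real.sqrt_nonneg _)]
  have hgeom : Summable fun j : ℕ => (|a| * |r|) ^ j :=
    (summable_mul_right_iff (Real.sqrt_pos.mpr hW).ne').mp <|
      h.abs.of_nonneg_of_le (fun j => by positivity) hbound
  rwa [summable_geometric_iff_norm_lt_one, Real.norm_of_nonneg (by positivity)] at hgeom

theorem summable_pow_mul_sqrt_openLoopCovariance (hW : 0 ≤ W) (hQ : 0 ≤ Q) (hr : |r| < 1)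
    (har : |a| * |r| < 1) :
    Summable fun j : ℕ => r ^ j * √(openLoopCovariance a W Q j) := by
  set ρ := max |a| 1
  have hρ : 1 ≤ ρ := le_max_right _ _
  have hratio : ‖ρ * |r|‖ < 1 := by
    rw [Real.norm_of_nonneg (by positivity), max_mul_of_nonneg _ _ (abs_nonneg r), one_mul]
    exact max_lt har hr
  have hmajorant : Summable fun j : ℕ => (j + 1) * (ρ * |r|) ^ j * √(W + Q) := by
    simpa using (summable_choose_mul_geometric_of_norm_lt_one 1 hratio).mul_right (√(W + Q))
  refine hmajorant.of_norm_bounded fun j => ?_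
  calc ‖r ^ j * √(openLoopCovariance a W Q j)‖
      = |r| ^ j * √(openLoopCovariance a W Q j) := by
        rw [norm_mul, norm_pow, Real.norm_eq_abs, Real.norm_of_nonneg (Real.sqrt_nonneg _)]
    _ ≤ |r| ^ j * ((j + 1) * ρ ^ j * √(W + Q)) := by
        gcongr
        exact sqrt_openLoopCovariance_le hW hQ hρ (le_max_left _ _) j
    _ = (j + 1) * (ρ * |r|) ^ j * √(W + Q) := by ring

end openLoopCovariance

theorem lgb_geometric_series_stddev_general (a W Q γ : ℝ) (hW : 0 < W) (hQ : 0 ≤ Q)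
    (hγ : |1 - γ| < 1) :
    Summable (fun j : ℕ => γ * (1 - γ) ^ j * √(openLoopCovariance a W Q j))
      ↔ |a| * |1 - γ| < 1 := by
  have hγ0 : γ ≠ 0 := by
    rintro rfl
    simp at hγ
  simp only [mul_assoc, summable_mul_left_iff hγ0]
  exact ⟨abs_mul_abs_lt_one_of_summable_pow_mul_sqrt_openLoopCovariance hW hQ,
    summable_pow_mul_sqrt_openLoopCovariance hW.le hQ hγ⟩

/-- For `a² > 1`, `W > 0`, `Q ≥ 0`, `γ̄ ∈ (0,1)` and
`f(j) = a^{2j}·W + Q·(a^{2j} − 1)/(a² − 1)`, the series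
`∑ⱼ γ̄·(1−γ̄)ʲ·√(f(j))` converges iff `|a|·(1−γ̄) < 1`. -/
theorem lgb_geometric_series_stddev
    (a W Q γ : ℝ) (ha : 1 < a ^ 2) (hW : 0 < W) (hQ : 0 ≤ Q)
    (hγ : γ ∈ Set.Ioo (0 : ℝ) 1) :
    Summable (fun j : ℕ =>
        γ * (1 - γ) ^ j *
          Real.sqrt (a ^ (2 * j) * W + Q * (a ^ (2 * j) - 1) / (a ^ 2 - 1)))
      ↔ |a| * (1 - γ) < 1 := by
  have habs : |1 - γ| = 1 - γ := abs_of_pos (sub_pos.mpr hγ.2)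
  simpa only [openLoopCovariance_eq_of_sq_ne_one ha.ne', habs] using
    lgb_geometric_series_stddev_general a W Q γ hW hQ (by linarith [hγ.1])
end

section
/- The Riccati maps g and h are order preserving for the Löwner order and g is dominated by h: for real n×n positive definite symmetric matrices P₁ ≤ P₂ one has h(P₁) ≤ h(P₂) and g(P₁) ≤ g(P₂), and for every positive definite symmetric P one has g(P) ≤ h(P). -/
open Matrix

/-- Time-update Riccati map `h(P) = A P Aᵀ + Q`. -/
def riccatiH {n : ℕ} (A Q P : Matrix (Fin n) (Fin n) ℝ) :
    Matrix (Fin n) (Fin n) ℝ := A * P * Aᵀ + Q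

/-- Measurement-update Riccati map `g(P) = ((A P Aᵀ + Q)⁻¹ + 𝓘)⁻¹`. -/
noncomputable def riccatiG {n : ℕ} (A Q I P : Matrix (Fin n) (Fin n) ℝ) :
    Matrix (Fin n) (Fin n) ℝ := ((A * P * Aᵀ + Q)⁻¹ + I)⁻¹

/-!
The Riccati map `g` is `h` followed by the measurement update `X ↦ (X⁻¹ + 𝓘)⁻¹`. The map `h` is a
congruence followed by a translation, so it is monotone. Inversion reverses the Löwner order on
positive definite matrices, because `Y - X` and `X⁻¹ - Y⁻¹` are the two Schur complements of the
block matrix `[[Y, 1], [1, X⁻¹]]`. Inverting twice makes the measurement update monotone, and since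
it adds `𝓘 ≥ 0` to the inverse, it can only decrease its argument.
-/

section TimeUpdate

variable {R m n : Type*} [Ring R] [StarRing R] [Fintype n]

/-- The Kalman filter time update `P ↦ A P Aᴴ + Q` of a covariance matrix, for a possibly
rectangular transition matrix `A`; over `ℝ` with square `A` it is `riccatiH`. -/
def timeUpdate (A : Matrix m n R) (Q : Matrix m m R) (P : Matrix n n R) : Matrix m m R :=
  A * P * Aᴴ + Q

theorem timeUpdate_sub_timeUpdate (A : Matrix m n R) (Q : Matrix m m R) (P₁ P₂ : Matrix n n R) :
    timeUpdate A Q P₂ - timeUpdate A Q P₁ = A * (P₂ - P₁) * Aᴴ := by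
  rw [timeUpdate, timeUpdate, add_sub_add_right_eq_sub, Matrix.mul_sub, Matrix.sub_mul]

variable [PartialOrder R]

theorem posSemidef_timeUpdate_sub_timeUpdate [Finite m] (A : Matrix m n R) (Q : Matrix m m R)
    {P₁ P₂ : Matrix n n R} (h : (P₂ - P₁).PosSemidef) :
    (timeUpdate A Q P₂ - timeUpdate A Q P₁).PosSemidef := by
  rw [timeUpdate_sub_timeUpdate]
  exact h.mul_mul_conjTranspose_same A

theorem posDef_timeUpdate [Fintype m] [AddLeftMono R] {A : Matrix m n R} {Q : Matrix m m R}
    {P : Matrix n n R} (hA : Function.Injective A.vecMul) (hQ : Q.PosSemidef) (hP : P.PosDef) :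
    (timeUpdate A Q P).PosDef :=
  (hP.mul_mul_conjTranspose_same hA).add_posSemidef hQ

end TimeUpdate

section MeasurementUpdate

variable {K n : Type*} [Field K] [Fintype n] [DecidableEq n]

/-- The Kalman filter measurement update `X ↦ (X⁻¹ + I)⁻¹` of a covariance matrix in information
form: the measurement adds its information matrix `I` to the inverse covariance. Since `⁻¹` is zero
on singular matrices, this has its intended meaning only if `X` and `X⁻¹ + I` are invertible. -/
noncomputable def measurementUpdate (I X : Matrix n n K) : Matrix n n K :=
  (X⁻¹ + I)⁻¹

variable [PartialOrder K] [StarRing K] [StarOrderedRing K]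

theorem posSemidef_inv_sub_inv_iff {X Y : Matrix n n K} (hX : X.PosDef) (hY : Y.PosDef) :
    (X⁻¹ - Y⁻¹).PosSemidef ↔ (Y - X).PosSemidef := by
  let _ := hX.isUnit.invertible
  let _ := hX.inv.isUnit.invertible
  let _ := hY.isUnit.invertible
  have schur_Y : (fromBlocks Y 1 1ᴴ X⁻¹).PosSemidef ↔ (X⁻¹ - Y⁻¹).PosSemidef := by
    simpa using PosDef.fromBlocks₁₁ 1 X⁻¹ hY
  have schur_X : (fromBlocks Y 1 1ᴴ X⁻¹).PosSemidef ↔ (Y - X).PosSemidef := by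
    simpa using PosDef.fromBlocks₂₂ Y 1 hX.inv
  exact schur_Y.symm.trans schur_X

theorem posSemidef_measurementUpdate_sub_measurementUpdate {I X Y : Matrix n n K}
    (hI : I.PosSemidef) (hX : X.PosDef) (h : (Y - X).PosSemidef) :
    (measurementUpdate I Y - measurementUpdate I X).PosSemidef := by
  have hY : Y.PosDef := by simpa using hX.add_posSemidef h
  have hXI : (X⁻¹ + I).PosDef := hX.inv.add_posSemidef hI
  have hYI : (Y⁻¹ + I).PosDef := hY.inv.add_posSemidef hI
  rw [measurementUpdate, measurementUpdate, posSemidef_inv_sub_inv_iff hYI hXI,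
    add_sub_add_right_eq_sub, posSemidef_inv_sub_inv_iff hX hY]
  exact h

theorem posSemidef_sub_measurementUpdate {I X : Matrix n n K} (hI : I.PosSemidef)
    (hX : X.PosDef) : (X - measurementUpdate I X).PosSemidef := by
  have hXI : (X⁻¹ + I).PosDef := hX.inv.add_posSemidef hI
  let _ := hXI.isUnit.invertible
  rw [measurementUpdate, ← posSemidef_inv_sub_inv_iff hXI.inv hX, inv_inv_of_invertible,
    add_sub_cancel_left]
  exact hI

end MeasurementUpdate

theorem riccatiH_eq_timeUpdate {n : ℕ} (A Q P : Matrix (Fin n) (Fin n) ℝ) :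
    riccatiH A Q P = timeUpdate A Q P := by
  rw [riccatiH, timeUpdate, conjTranspose_eq_transpose_of_trivial]

theorem riccatiG_eq_measurementUpdate_timeUpdate {n : ℕ} (A Q I P : Matrix (Fin n) (Fin n) ℝ) :
    riccatiG A Q I P = measurementUpdate I (timeUpdate A Q P) := by
  rw [← riccatiH_eq_timeUpdate, riccatiG, measurementUpdate, riccatiH]

theorem riccati_monotone_and_g_le_h_general {K m n : Type*} [Field K] [PartialOrder K] [StarRing K]
    [StarOrderedRing K] [Fintype m] [DecidableEq m] [Fintype n]
    (A : Matrix m n K) (Q I : Matrix m m K) (hI : I.PosSemidef) :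
    (∀ P₁ P₂ : Matrix n n K, (P₂ - P₁).PosSemidef →
        (timeUpdate A Q P₂ - timeUpdate A Q P₁).PosSemidef ∧
        ((timeUpdate A Q P₁).PosDef →
          (measurementUpdate I (timeUpdate A Q P₂) -
            measurementUpdate I (timeUpdate A Q P₁)).PosSemidef))
    ∧ (∀ P : Matrix n n K, (timeUpdate A Q P).PosDef →
        (timeUpdate A Q P - measurementUpdate I (timeUpdate A Q P)).PosSemidef) := by
  refine ⟨fun P₁ P₂ hP ↦ ?_, fun P ↦ posSemidef_sub_measurementUpdate hI⟩
  have hH := posSemidef_timeUpdate_sub_timeUpdate A Q hP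
  exact ⟨hH, fun hpos ↦ posSemidef_measurementUpdate_sub_measurementUpdate hI hpos hH⟩

/-- The Riccati maps `g` and `h` are order preserving for the
Löwner order, and `g` is dominated by `h`. -/
theorem riccati_monotone_and_g_le_h
    {n : ℕ} (hn : 1 ≤ n) (A Q I : Matrix (Fin n) (Fin n) ℝ)
    (hA : IsUnit A.det) (hQ : Q.PosSemidef) (hI : I.PosSemidef) :
    (∀ P₁ P₂ : Matrix (Fin n) (Fin n) ℝ, P₁.PosDef → P₂.PosDef →
        (P₂ - P₁).PosSemidef →
        (riccatiH A Q P₂ - riccatiH A Q P₁).PosSemidef ∧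
        (riccatiG A Q I P₂ - riccatiG A Q I P₁).PosSemidef)
    ∧ (∀ P : Matrix (Fin n) (Fin n) ℝ, P.PosDef →
        (riccatiH A Q P - riccatiG A Q I P).PosSemidef) := by
  have hA_inj := vecMul_injective_of_isUnit ((isUnit_iff_isUnit_det A).2 hA)
  obtain ⟨hmono, hle⟩ := riccati_monotone_and_g_le_h_general A Q I hI
  simp only [riccatiH_eq_timeUpdate, riccatiG_eq_measurementUpdate_timeUpdate]
  exact ⟨fun P₁ P₂ hP₁ _ h ↦ (hmono P₁ P₂ h).imp_right (· (posDef_timeUpdate hA_inj hQ hP₁)),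
    fun P hP ↦ hle P (posDef_timeUpdate hA_inj hQ hP)⟩
end

section
/- For the matrix Linear/Gaussian/Bernoulli covariance process started at P(0) ≥ P∞, where P∞ is a positive definite fixed point of g: for every arrival sequence s ∈ {0,1}^ℕ and every k one has P(k) ≥ P∞ and hence P(k)⁻¹ ≤ P∞⁻¹; consequently, for every arrival probability γ̄ ∈ (0,1] and every k, the expected information matrix satisfies E[P(k)⁻¹] ≤ P∞⁻¹ in the Löwner order (in particular the expectation exists). -/
open Matrix MeasureTheory ProbabilityTheory

/-- The matrix Linear/Gaussian/Bernoulli covariance process driven by the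
arrival sequence `s : ℕ → Bool`, started at `P₀`. -/
noncomputable def lgbMatProc {n : ℕ} (A Q I P₀ : Matrix (Fin n) (Fin n) ℝ)
    (s : ℕ → Bool) : ℕ → Matrix (Fin n) (Fin n) ℝ
  | 0 => P₀
  | k + 1 =>
      if s k then riccatiG A Q I (lgbMatProc A Q I P₀ s k)
      else riccatiH A Q (lgbMatProc A Q I P₀ s k)

/-!
If `H = h(P)` is positive definite then `g(P) = (H⁻¹ + 𝓘)⁻¹ ≤ H`, since `𝓘` only adds information.
Moreover `h` is monotone, and so is `g`, because it reverses the Löwner order twice by inversion.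
Hence `{P | P∞ ≤ P}` is stable under both updates as soon as `P∞ ≤ g(P∞)`, and the process never
leaves it, whatever the arrivals are. Inverting, and averaging over any law of the arrivals,
preserves the resulting bound `P(k)⁻¹ ≤ P∞⁻¹`.
-/

open scoped MatrixOrder

section LoewnerOrder

open scoped ComplexOrder

variable {ι 𝕜 : Type*} [RCLike 𝕜] {X Y : Matrix ι ι 𝕜}

theorem posDef_of_le (hX : X.PosDef) (hXY : X ≤ Y) : Y.PosDef := by
  simpa only [add_sub_cancel] using hX.add_posSemidef hXY

variable [Fintype ι] [DecidableEq ι]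

-- Both sides are the two Schur complement criteria for the block matrix `[[X, 1], [1, Y]]`.
theorem inv_le_comm_of_posDef (hX : X.PosDef) (hY : Y.PosDef) : X⁻¹ ≤ Y ↔ Y⁻¹ ≤ X := by
  have := hX.isUnit.invertible
  have := hY.isUnit.invertible
  have hschur := (PosDef.fromBlocks₁₁ 1 Y hX).symm.trans (PosDef.fromBlocks₂₂ X 1 hY)
  simpa only [conjTranspose_one, one_mul, mul_one, ← le_iff] using hschur

theorem inv_le_inv_of_posDef (hX : X.PosDef) (hXY : X ≤ Y) : Y⁻¹ ≤ X⁻¹ := by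
  rw [inv_le_comm_of_posDef (posDef_of_le hX hXY) hX.inv,
    nonsing_inv_nonsing_inv _ ((isUnit_iff_isUnit_det X).mp hX.isUnit)]
  exact hXY

end LoewnerOrder

section MatrixIntegral

open scoped ComplexOrder

variable {Ω ι κ 𝕜 : Type*} [MeasurableSpace Ω] {μ : Measure Ω} [RCLike 𝕜]

/-- The entrywise Bochner integral of a matrix-valued function, that is, the expectation of a
random matrix when `μ` is a probability measure. It is defined without choosing a norm on
matrices; an entry that is not integrable contributes `0`. -/
noncomputable def matrixIntegral (μ : Measure Ω) (X : Ω → Matrix ι κ 𝕜) : Matrix ι κ 𝕜 :=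
  of fun i j => ∫ ω, X ω i j ∂μ

theorem matrixIntegral_const [IsProbabilityMeasure μ] (C : Matrix ι κ 𝕜) :
    matrixIntegral μ (fun _ => C) = C := by
  ext i j
  simp [matrixIntegral]

theorem matrixIntegral_sub {X Y : Ω → Matrix ι κ 𝕜}
    (hX : ∀ i j, Integrable (fun ω => X ω i j) μ) (hY : ∀ i j, Integrable (fun ω => Y ω i j) μ) :
    matrixIntegral μ (fun ω => X ω - Y ω) = matrixIntegral μ X - matrixIntegral μ Y := by
  ext i j
  exact integral_sub (hX i j) (hY i j)

theorem conjTranspose_matrixIntegral (X : Ω → Matrix ι κ 𝕜) :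
    (matrixIntegral μ X)ᴴ = matrixIntegral μ fun ω => (X ω)ᴴ := by
  ext i j
  exact integral_conj.symm

theorem dotProduct_matrixIntegral_mulVec [Fintype ι] [Fintype κ] {X : Ω → Matrix ι κ 𝕜}
    (hX : ∀ i j, Integrable (fun ω => X ω i j) μ) (u : ι → 𝕜) (v : κ → 𝕜) :
    u ⬝ᵥ matrixIntegral μ X *ᵥ v = ∫ ω, u ⬝ᵥ X ω *ᵥ v ∂μ := by
  have hterm (i : ι) (j : κ) : Integrable (fun ω => u i * (X ω i j * v j)) μ :=
    ((hX i j).mul_const _).const_mul _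
  simp only [dotProduct, mulVec, matrixIntegral, of_apply, Finset.mul_sum]
  rw [integral_finsetSum _ fun i _ => integrable_finsetSum _ fun j _ => hterm i j]
  refine Finset.sum_congr rfl fun i _ => ?_
  rw [integral_finsetSum _ fun j _ => hterm i j]
  simp only [integral_const_mul, integral_mul_const]

variable [Finite ι] {X Y : Ω → Matrix ι ι 𝕜}

theorem posSemidef_matrixIntegral (hint : ∀ i j, Integrable (fun ω => X ω i j) μ)
    (hX : ∀ᵐ ω ∂μ, (X ω).PosSemidef) : (matrixIntegral μ X).PosSemidef := by
  cases nonempty_fintype ι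
  refine .of_dotProduct_mulVec_nonneg ?_ fun v => ?_
  · rw [IsHermitian, conjTranspose_matrixIntegral]
    ext i j
    refine integral_congr_ae ?_
    filter_upwards [hX] with ω hω
    rw [hω.isHermitian.eq]
  · rw [dotProduct_matrixIntegral_mulVec hint]
    refine integral_nonneg_of_ae ?_
    filter_upwards [hX] with ω hω
    exact hω.dotProduct_mulVec_nonneg v

theorem matrixIntegral_mono_ae (hX : ∀ i j, Integrable (fun ω => X ω i j) μ)
    (hY : ∀ i j, Integrable (fun ω => Y ω i j) μ) (hXY : ∀ᵐ ω ∂μ, X ω ≤ Y ω) :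
    matrixIntegral μ X ≤ matrixIntegral μ Y := by
  rw [le_iff, ← matrixIntegral_sub hY hX]
  exact posSemidef_matrixIntegral (fun i j => (hY i j).sub (hX i j)) hXY

theorem matrixIntegral_le_of_ae_le [IsProbabilityMeasure μ] {C : Matrix ι ι 𝕜}
    (hX : ∀ i j, Integrable (fun ω => X ω i j) μ) (hXC : ∀ᵐ ω ∂μ, X ω ≤ C) :
    matrixIntegral μ X ≤ C := by
  simpa only [matrixIntegral_const] using
    matrixIntegral_mono_ae hX (fun i j => integrable_const (C i j)) hXC

end MatrixIntegral

theorem integrable_of_dependsOn_finite {ι E : Type*} {α : ι → Type*} [∀ i, Finite (α i)]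
    [∀ i, MeasurableSpace (α i)] [∀ i, MeasurableSingletonClass (α i)] [NormedAddCommGroup E]
    {μ : Measure (Π i, α i)} [IsFiniteMeasure μ] {f : (Π i, α i) → E} {s : Set ι}
    (hs : s.Finite) (hf : DependsOn f s) : Integrable f μ := by
  have := hs.to_subtype
  obtain ⟨g, rfl⟩ := dependsOn_iff_exists_comp.mp hf
  exact Integrable.of_finite.comp_measurable s.measurable_restrict

section Riccati

variable {n : ℕ} {A Q I L P₀ X Y : Matrix (Fin n) (Fin n) ℝ}

theorem riccatiH_posDef (hA : IsUnit A.det) (hQ : Q.PosSemidef) (hX : X.PosDef) :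
    (riccatiH A Q X).PosDef := by
  have hAinj := vecMul_injective_of_isUnit ((isUnit_iff_isUnit_det A).mpr hA)
  exact (hX.mul_mul_conjTranspose_same hAinj).add_posSemidef hQ

theorem riccatiH_mono (hXY : X ≤ Y) : riccatiH A Q X ≤ riccatiH A Q Y :=
  add_le_add_left (star_right_conjugate_le_conjugate hXY A) Q

theorem riccatiG_mono (hI : I.PosSemidef) (hX : (riccatiH A Q X).PosDef) (hXY : X ≤ Y) :
    riccatiG A Q I X ≤ riccatiG A Q I Y := by
  have hH : riccatiH A Q X ≤ riccatiH A Q Y := riccatiH_mono hXY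
  have hinfo : (riccatiH A Q Y)⁻¹ + I ≤ (riccatiH A Q X)⁻¹ + I :=
    add_le_add_left (inv_le_inv_of_posDef hX hH) I
  exact inv_le_inv_of_posDef ((posDef_of_le hX hH).inv.add_posSemidef hI) hinfo

theorem riccatiG_le_riccatiH (hI : I.PosSemidef) (hX : (riccatiH A Q X).PosDef) :
    riccatiG A Q I X ≤ riccatiH A Q X :=
  (inv_le_comm_of_posDef (hX.inv.add_posSemidef hI) hX).mpr (le_add_of_nonneg_right hI.nonneg)

theorem le_lgbMatProc (hI : I.PosSemidef) (hHL : (riccatiH A Q L).PosDef)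
    (hL : L ≤ riccatiG A Q I L) (hP₀ : L ≤ P₀) (s : ℕ → Bool) (k : ℕ) :
    L ≤ lgbMatProc A Q I P₀ s k := by
  induction k with
  | zero => exact hP₀
  | succ k ih =>
    rw [lgbMatProc]
    split_ifs
    · exact hL.trans (riccatiG_mono hI hHL ih)
    · calc
        L ≤ riccatiG A Q I L := hL
        _ ≤ riccatiH A Q L := riccatiG_le_riccatiH hI hHL
        _ ≤ riccatiH A Q (lgbMatProc A Q I P₀ s k) := riccatiH_mono ih

variable (A Q I P₀) in
theorem dependsOn_lgbMatProc (k : ℕ) :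
    DependsOn (fun s => lgbMatProc A Q I P₀ s k) (Set.Iio k) := by
  induction k with
  | zero => exact fun _ _ _ => rfl
  | succ k ih =>
    intro s t hst
    have hprev := ih fun i hi => hst i (hi.trans k.lt_succ_self)
    have hlast := hst k k.lt_succ_self
    simp only [lgbMatProc, hprev, hlast]

variable (A Q I P₀) in
theorem integrable_lgbMatProc_inv_apply (μ : Measure (ℕ → Bool)) [IsFiniteMeasure μ] (k : ℕ)
    (i j : Fin n) : Integrable (fun s => (lgbMatProc A Q I P₀ s k)⁻¹ i j) μ :=
  integrable_of_dependsOn_finite (Set.finite_Iio k) fun _ _ hst =>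
    congrArg (fun P => P⁻¹ i j) (dependsOn_lgbMatProc A Q I P₀ k hst)

theorem lgb_information_matrix_bounded_general (hI : I.PosSemidef) (hLpos : L.PosDef)
    (hHL : (riccatiH A Q L).PosDef) (hL : L ≤ riccatiG A Q I L) (hP₀ : L ≤ P₀) :
    (∀ (s : ℕ → Bool) (k : ℕ),
      L ≤ lgbMatProc A Q I P₀ s k ∧ (lgbMatProc A Q I P₀ s k)⁻¹ ≤ L⁻¹) ∧
    ∀ (μ : Measure (ℕ → Bool)) [IsProbabilityMeasure μ] (k : ℕ),
      (∀ i j, Integrable (fun s => (lgbMatProc A Q I P₀ s k)⁻¹ i j) μ) ∧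
      matrixIntegral μ (fun s => (lgbMatProc A Q I P₀ s k)⁻¹) ≤ L⁻¹ := by
  have hle := le_lgbMatProc hI hHL hL hP₀
  have hinv (s : ℕ → Bool) (k : ℕ) : (lgbMatProc A Q I P₀ s k)⁻¹ ≤ L⁻¹ :=
    inv_le_inv_of_posDef hLpos (hle s k)
  refine ⟨fun s k => ⟨hle s k, hinv s k⟩, fun μ _ k => ?_⟩
  have hint := integrable_lgbMatProc_inv_apply A Q I P₀ μ k
  exact ⟨hint, matrixIntegral_le_of_ae_le hint (ae_of_all μ fun s => hinv s k)⟩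

end Riccati

/-- For the matrix LGB covariance process started at
`P(0) = P₀ ≥ P∞`, where `P∞` is a positive definite fixed point of `g`: for
every arrival sequence and every `k`, `P(k) ≥ P∞` and hence `P(k)⁻¹ ≤ P∞⁻¹`;
consequently, for every arrival probability `γ̄ ∈ (0,1]` and every `k`, the
expected information matrix exists (entrywise) and satisfies
`E[P(k)⁻¹] ≤ P∞⁻¹` in the Löwner order. -/
theorem lgb_information_matrix_bounded
    {n : ℕ} (hn : 1 ≤ n) (A Q I Pinf P₀ : Matrix (Fin n) (Fin n) ℝ)
    (hA : IsUnit A.det) (hQ : Q.PosSemidef) (hI : I.PosSemidef)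
    (hPinf : Pinf.PosDef) (hfix : riccatiG A Q I Pinf = Pinf)
    (hP₀ : P₀.PosDef) (hP₀inf : (P₀ - Pinf).PosSemidef) :
    (∀ (s : ℕ → Bool) (k : ℕ),
        (lgbMatProc A Q I P₀ s k - Pinf).PosSemidef ∧
        (Pinf⁻¹ - (lgbMatProc A Q I P₀ s k)⁻¹).PosSemidef)
    ∧ (∀ γ : ℝ, γ ∈ Set.Ioc (0 : ℝ) 1 →
        ∀ μ : Measure (ℕ → Bool), IsProbabilityMeasure μ →
        (∀ k : ℕ, μ {ω : ℕ → Bool | ω k = true} = ENNReal.ofReal γ) →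
        iIndepFun
          (fun (k : ℕ) (ω : ℕ → Bool) => ω k) μ →
        ∀ k : ℕ,
          (∀ i j : Fin n,
            Integrable (fun ω : ℕ → Bool => (lgbMatProc A Q I P₀ ω k)⁻¹ i j) μ) ∧
          (Pinf⁻¹ - Matrix.of (fun i j : Fin n =>
              ∫ ω, (lgbMatProc A Q I P₀ ω k)⁻¹ i j ∂μ)).PosSemidef) := by
  obtain ⟨hpath, hmean⟩ := lgb_information_matrix_bounded_general hI hPinf
    (riccatiH_posDef hA hQ hPinf) hfix.ge hP₀inf
  exact ⟨hpath, fun _ _ μ _ _ _ => hmean μ⟩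
end

section
/- For the natural (Fisher/affine-invariant) distance d on positive definite matrices: if P₁, P₂, P₃ are real n×n positive definite symmetric matrices with P₁ ≤ P₂ ≤ P₃ in the Löwner order, then d(P₁,P₂) ≤ d(P₁,P₃). -/
open Matrix

noncomputable def matEigs {n : ℕ} (M : Matrix (Fin n) (Fin n) ℝ) : Fin n → ℝ := by
  classical exact if h : M.IsHermitian then h.eigenvalues else 0

/-- The positive semidefinite square root, as in the older Mathlib (it is gone from the present one). -/
noncomputable def Matrix.PosSemidef.sqrt {n : Type*} [Fintype n] [DecidableEq n]
    {A : Matrix n n ℝ} (hA : A.PosSemidef) : Matrix n n ℝ :=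
  hA.1.eigenvectorUnitary.1 * diagonal (Real.sqrt ∘ hA.1.eigenvalues) *
    (star hA.1.eigenvectorUnitary : Matrix n n ℝ)

noncomputable def matSqrt {n : ℕ} (M : Matrix (Fin n) (Fin n) ℝ) :
    Matrix (Fin n) (Fin n) ℝ := by
  classical exact if h : M.PosSemidef then h.sqrt else 0

/-- The natural (Fisher / affine-invariant) distance on positive definite
matrices: `d(P₁,P₂) = (∑ᵢ (log λᵢ)²)^{1/2}` where `λᵢ` are the eigenvalues of
`P₂^{-1/2} P₁ P₂^{-1/2}`. -/
noncomputable def natDist {n : ℕ} (P₁ P₂ : Matrix (Fin n) (Fin n) ℝ) : ℝ :=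
  Real.sqrt (∑ i : Fin n,
    Real.log (matEigs ((matSqrt P₂)⁻¹ * P₁ * (matSqrt P₂)⁻¹) i) ^ 2)

/-!
Since `A * B` and `B * A` have the same characteristic polynomial, the `λᵢ` defining `d(P₁, P)` are
also the eigenvalues of `P₁^{1/2} P⁻¹ P₁^{1/2}`, in which only the middle factor depends on `P`.
Inversion reverses the Löwner order, congruence preserves it, and the ordered eigenvalues are
monotone in it by Weyl's principle. Hence, as `P` runs through `P₁ ≤ P₂ ≤ P₃`, each `λᵢ` decreases
from `1` while staying positive, and `(log λ)²` is antitone on `(0, 1]`.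
-/

section Weyl

open Module

variable {𝕜 E : Type*} [RCLike 𝕜] [NormedAddCommGroup E] [InnerProductSpace 𝕜 E]

lemma exists_ne_zero_forall_inner_eq_zero {ι : Type*} [Fintype ι]
    (hι : Fintype.card ι < finrank 𝕜 E) (v : ι → E) :
    ∃ x : E, x ≠ 0 ∧ ∀ j, inner 𝕜 (v j) x = 0 := by
  have : FiniteDimensional 𝕜 E := .of_finrank_pos (Nat.zero_lt_of_lt hι)
  have hker : LinearMap.ker (LinearMap.pi fun j ↦ (innerSL 𝕜 (v j)).toLinearMap) ≠ ⊥ :=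
    LinearMap.ker_ne_bot_of_finrank_lt (by rwa [finrank_fintype_fun_eq_card])
  obtain ⟨x, hx, hx0⟩ := (Submodule.ne_bot_iff _).mp hker
  exact ⟨x, hx0, congrFun (LinearMap.mem_ker.mp hx)⟩

variable [FiniteDimensional 𝕜 E] {S T : E →ₗ[𝕜] E} {n : ℕ}

lemma re_inner_apply_eq_sum_eigenvalues (hT : T.IsSymmetric) (hn : finrank 𝕜 E = n) (x : E) :
    RCLike.re (inner 𝕜 x (T x)) =
      ∑ j, hT.eigenvalues hn j * ‖inner 𝕜 (hT.eigenvectorBasis hn j) x‖ ^ 2 := by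
  rw [← (hT.eigenvectorBasis hn).sum_inner_mul_inner x (T x), map_sum]
  refine Finset.sum_congr rfl fun j _ ↦ ?_
  rw [← hT, hT.apply_eigenvectorBasis, inner_smul_left, RCLike.conj_ofReal, mul_left_comm,
    RCLike.re_ofReal_mul, inner_mul_symm_re_eq_norm, norm_mul, norm_inner_symm, sq]

lemma re_inner_apply_le_mul_norm_sq (hT : T.IsSymmetric) (hn : finrank 𝕜 E = n) {c : ℝ} {x : E}
    (h : ∀ j, inner 𝕜 (hT.eigenvectorBasis hn j) x ≠ 0 → hT.eigenvalues hn j ≤ c) :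
    RCLike.re (inner 𝕜 x (T x)) ≤ c * ‖x‖ ^ 2 := by
  rw [re_inner_apply_eq_sum_eigenvalues hT hn,
    ← (hT.eigenvectorBasis hn).sum_sq_norm_inner_right x, Finset.mul_sum]
  refine Finset.sum_le_sum fun j _ ↦ ?_
  by_cases hj : inner 𝕜 (hT.eigenvectorBasis hn j) x = 0
  · simp [hj]
  · gcongr
    exact h j hj

lemma mul_norm_sq_le_re_inner_apply (hT : T.IsSymmetric) (hn : finrank 𝕜 E = n) {c : ℝ} {x : E}
    (h : ∀ j, inner 𝕜 (hT.eigenvectorBasis hn j) x ≠ 0 → c ≤ hT.eigenvalues hn j) :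
    c * ‖x‖ ^ 2 ≤ RCLike.re (inner 𝕜 x (T x)) := by
  rw [re_inner_apply_eq_sum_eigenvalues hT hn,
    ← (hT.eigenvectorBasis hn).sum_sq_norm_inner_right x, Finset.mul_sum]
  refine Finset.sum_le_sum fun j _ ↦ ?_
  by_cases hj : inner 𝕜 (hT.eigenvectorBasis hn j) x = 0
  · simp [hj]
  · gcongr
    exact h j hj

theorem isSymmetric_eigenvalues_le_of_le (hS : S.IsSymmetric) (hT : T.IsSymmetric)
    (hn : finrank 𝕜 E = n) (hST : S ≤ T) (i : Fin n) :
    hS.eigenvalues hn i ≤ hT.eigenvalues hn i := by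
  -- Fewer than `n` orthogonality conditions leave a test vector lying both in the span of the
  -- leading eigenvectors of `S` and in the span of the trailing eigenvectors of `T`.
  obtain ⟨x, hx0, hx⟩ := exists_ne_zero_forall_inner_eq_zero (𝕜 := 𝕜) (ι := {j : Fin n // j ≠ i})
    (by rw [Fintype.card_subtype_compl, Fintype.card_subtype_eq, Fintype.card_fin, hn]
        exact Nat.sub_one_lt_of_lt i.pos)
    fun j ↦ if j.1 < i then hT.eigenvectorBasis hn j else hS.eigenvectorBasis hn j
  have hlower : hS.eigenvalues hn i * ‖x‖ ^ 2 ≤ RCLike.re (inner 𝕜 x (S x)) := by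
    refine mul_norm_sq_le_re_inner_apply hS hn fun j hj ↦ hS.eigenvalues_antitone hn ?_
    contrapose! hj
    simpa [hj.not_gt] using hx ⟨j, hj.ne'⟩
  have hupper : RCLike.re (inner 𝕜 x (T x)) ≤ hT.eigenvalues hn i * ‖x‖ ^ 2 := by
    refine re_inner_apply_le_mul_norm_sq hT hn fun j hj ↦ hT.eigenvalues_antitone hn ?_
    contrapose! hj
    simpa [hj] using hx ⟨j, hj.ne⟩
  have hquad : RCLike.re (inner 𝕜 x (S x)) ≤ RCLike.re (inner 𝕜 x (T x)) := by
    simpa [inner_sub_right] using LinearMap.IsPositive.re_inner_nonneg_right hST x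
  exact le_of_mul_le_mul_right (hlower.trans (hquad.trans hupper)) (by positivity)

end Weyl

section Loewner

open scoped ComplexOrder MatrixOrder

variable {𝕜 m : Type*} [RCLike 𝕜] [Fintype m] [DecidableEq m] {A B : Matrix m m 𝕜}

theorem isHermitian_eigenvalues_le_of_le (hA : A.IsHermitian) (hB : B.IsHermitian) (hAB : A ≤ B)
    (i : m) : hA.eigenvalues i ≤ hB.eigenvalues i := by
  refine isSymmetric_eigenvalues_le_of_le _ _ _ ?_ _
  rw [LinearMap.le_def, ← map_sub, isPositive_toEuclideanLin_iff]
  exact hAB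

lemma isHermitian_eigenvalues_one (i : m) :
    (isHermitian_one : (1 : Matrix m m 𝕜).IsHermitian).eigenvalues i = 1 := by
  have : Nonempty m := ⟨i⟩
  simpa only [spectrum.one_eq, Set.mem_singleton_iff] using
    isHermitian_one.eigenvalues_mem_spectrum_real (A := (1 : Matrix m m 𝕜)) i

lemma posDef_inv_le_inv (hA : A.PosDef) (hAB : A ≤ B) : B⁻¹ ≤ A⁻¹ := by
  have hB : B.PosDef := by simpa only [add_sub_cancel] using hA.add_posSemidef hAB
  let _ := hB.isUnit.invertible
  let _ := hA.inv.isUnit.invertible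
  -- Both inequalities say that the block matrix `[B 1; 1 A⁻¹]` is positive semidefinite.
  have hblock : (fromBlocks B 1 1ᴴ A⁻¹).PosSemidef := by
    rw [PosDef.fromBlocks₂₂ B 1 hA.inv]
    simpa [Matrix.le_iff, nonsing_inv_nonsing_inv A ((isUnit_iff_isUnit_det A).mp hA.isUnit)]
      using hAB
  simpa [Matrix.le_iff] using (PosDef.fromBlocks₁₁ 1 A⁻¹ hB).mp hblock

end Loewner

section MatSqrt

variable {m : Type*} [Fintype m] [DecidableEq m] {A : Matrix m m ℝ}

lemma posSemidef_sqrt_eq_conjStarAlgAut (hA : A.PosSemidef) :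
    hA.sqrt = Unitary.conjStarAlgAut ℝ _ hA.1.eigenvectorUnitary
      (diagonal (Real.sqrt ∘ hA.1.eigenvalues)) :=
  rfl

lemma isHermitian_posSemidef_sqrt (hA : A.PosSemidef) : hA.sqrt.IsHermitian := by
  rw [posSemidef_sqrt_eq_conjStarAlgAut, IsHermitian, ← star_eq_conjTranspose, ← map_star,
    star_eq_conjTranspose, diagonal_conjTranspose, star_trivial]

lemma posSemidef_sqrt_mul_self (hA : A.PosSemidef) : hA.sqrt * hA.sqrt = A := by
  conv_rhs => rw [hA.1.spectral_theorem]
  rw [posSemidef_sqrt_eq_conjStarAlgAut, ← map_mul, diagonal_mul_diagonal]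
  simp [Real.mul_self_sqrt (hA.eigenvalues_nonneg _)]

variable {n : ℕ} {P : Matrix (Fin n) (Fin n) ℝ}

lemma isHermitian_matSqrt (P : Matrix (Fin n) (Fin n) ℝ) : (matSqrt P).IsHermitian := by
  unfold matSqrt
  split_ifs with hP
  · exact isHermitian_posSemidef_sqrt hP
  · exact isHermitian_zero

lemma matSqrt_mul_self (hP : P.PosSemidef) : matSqrt P * matSqrt P = P := by
  rw [matSqrt, dif_pos hP, posSemidef_sqrt_mul_self]

lemma isUnit_matSqrt (hP : P.PosDef) : IsUnit (matSqrt P) := by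
  rw [← isUnit_mul_self_iff, matSqrt_mul_self hP.posSemidef]
  exact hP.isUnit

lemma inv_matSqrt_mul_inv_matSqrt (hP : P.PosSemidef) : (matSqrt P)⁻¹ * (matSqrt P)⁻¹ = P⁻¹ := by
  rw [← Matrix.mul_inv_rev, matSqrt_mul_self hP]

lemma matSqrt_mul_inv_mul_matSqrt (hP : P.PosDef) : matSqrt P * P⁻¹ * matSqrt P = 1 := by
  have hdet := (isUnit_iff_isUnit_det _).mp (isUnit_matSqrt hP)
  rw [← inv_matSqrt_mul_inv_matSqrt hP.posSemidef, mul_nonsing_inv_cancel_left _ _ hdet,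
    nonsing_inv_mul _ hdet]

end MatSqrt

section NatDist

open scoped MatrixOrder

variable {n : ℕ} {A B S : Matrix (Fin n) (Fin n) ℝ}

lemma matEigs_of_isHermitian (hA : A.IsHermitian) : matEigs A = hA.eigenvalues :=
  dif_pos hA

lemma matEigs_eq_of_charpoly_eq (hA : A.IsHermitian) (hB : B.IsHermitian)
    (h : A.charpoly = B.charpoly) : matEigs A = matEigs B := by
  rw [matEigs_of_isHermitian hA, matEigs_of_isHermitian hB]
  exact (hA.eigenvalues_eq_eigenvalues_iff hB).mpr h

lemma isHermitian_conj (hS : S.IsHermitian) (hA : A.IsHermitian) : (S * A * S).IsHermitian := by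
  simpa only [hS.eq] using isHermitian_mul_mul_conjTranspose S hA

lemma matEigs_conj_pos (hS : S.IsHermitian) (hSu : IsUnit S) (hA : A.PosDef) (i : Fin n) :
    0 < matEigs (S * A * S) i := by
  have hconj : (S * A * S).PosDef := by
    simpa only [star_eq_conjTranspose, hS.eq] using hSu.posDef_star_left_conjugate_iff.mpr hA
  rw [matEigs_of_isHermitian hconj.isHermitian]
  exact hconj.eigenvalues_pos i

lemma matEigs_conj_inv_anti (hS : S.IsHermitian) (hA : A.PosDef) (hAB : A ≤ B) (i : Fin n) :
    matEigs (S * B⁻¹ * S) i ≤ matEigs (S * A⁻¹ * S) i := by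
  have hB : B.IsHermitian := by
    simpa only [add_sub_cancel] using hA.isHermitian.add hAB.isHermitian
  rw [matEigs_of_isHermitian (isHermitian_conj hS hB.inv),
    matEigs_of_isHermitian (isHermitian_conj hS hA.isHermitian.inv)]
  exact isHermitian_eigenvalues_le_of_le _ _
    (IsSelfAdjoint.conjugate_le_conjugate (posDef_inv_le_inv hA hAB) hS) i

lemma matEigs_matSqrt_conj_inv_le_one (hA : A.PosDef) (hAB : A ≤ B) (i : Fin n) :
    matEigs (matSqrt A * B⁻¹ * matSqrt A) i ≤ 1 := by
  refine (matEigs_conj_inv_anti (isHermitian_matSqrt A) hA hAB i).trans_eq ?_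
  rw [matSqrt_mul_inv_mul_matSqrt hA, matEigs_of_isHermitian isHermitian_one,
    isHermitian_eigenvalues_one]

variable {P₁ P₂ : Matrix (Fin n) (Fin n) ℝ}

-- `P₂^{-1/2} P₁ P₂^{-1/2}` and `P₁^{1/2} P₂⁻¹ P₁^{1/2}` are the two products of the factors
-- `P₂^{-1/2} P₁^{1/2}` and `P₁^{1/2} P₂^{-1/2}`.
lemma natDist_eq_sqrt_sum_sq_log_matEigs (h₁ : P₁.PosSemidef) (h₂ : P₂.PosSemidef) :
    natDist P₁ P₂ = √(∑ i, Real.log (matEigs (matSqrt P₁ * P₂⁻¹ * matSqrt P₁) i) ^ 2) := by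
  have hcharpoly : ((matSqrt P₂)⁻¹ * P₁ * (matSqrt P₂)⁻¹).charpoly =
      (matSqrt P₁ * P₂⁻¹ * matSqrt P₁).charpoly := by
    rw [← inv_matSqrt_mul_inv_matSqrt h₂]
    nth_rw 1 [← matSqrt_mul_self h₁]
    simpa only [Matrix.mul_assoc] using
      charpoly_mul_comm ((matSqrt P₂)⁻¹ * matSqrt P₁) (matSqrt P₁ * (matSqrt P₂)⁻¹)
  have hherm : ((matSqrt P₂)⁻¹ * P₁ * (matSqrt P₂)⁻¹).IsHermitian :=
    isHermitian_conj (isHermitian_matSqrt P₂).inv h₁.isHermitian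
  rw [natDist, matEigs_eq_of_charpoly_eq hherm
    (isHermitian_conj (isHermitian_matSqrt P₁) h₂.isHermitian.inv) hcharpoly]

lemma antitoneOn_sq_log : AntitoneOn (fun x ↦ Real.log x ^ 2) (Set.Ioc 0 1) := by
  intro x hx y hy hxy
  have hlog := Real.log_le_log hx.1 hxy
  have hlog_nonpos := Real.log_nonpos hy.1.le hy.2
  exact sq_le_sq.mpr (abs_le_abs_of_nonpos hlog_nonpos hlog)

end NatDist

/-- For the natural distance on positive definite matrices:
if `P₁ ≤ P₂ ≤ P₃` in the Löwner order, then `d(P₁,P₂) ≤ d(P₁,P₃)`. -/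
theorem natDist_mono_of_loewner
    {n : ℕ} (P₁ P₂ P₃ : Matrix (Fin n) (Fin n) ℝ)
    (h₁ : P₁.PosDef) (h₂ : P₂.PosDef) (h₃ : P₃.PosDef)
    (h₁₂ : (P₂ - P₁).PosSemidef) (h₂₃ : (P₃ - P₂).PosSemidef) :
    natDist P₁ P₂ ≤ natDist P₁ P₃ := by
  have hpos := matEigs_conj_pos (isHermitian_matSqrt P₁) (isUnit_matSqrt h₁) h₃.inv
  have hle_one := matEigs_matSqrt_conj_inv_le_one h₁ h₁₂
  have hanti := matEigs_conj_inv_anti (isHermitian_matSqrt P₁) h₂ h₂₃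
  rw [natDist_eq_sqrt_sum_sq_log_matEigs h₁.posSemidef h₂.posSemidef,
    natDist_eq_sqrt_sum_sq_log_matEigs h₁.posSemidef h₃.posSemidef]
  refine Real.sqrt_le_sqrt (Finset.sum_le_sum fun i _ ↦ ?_)
  exact antitoneOn_sq_log ⟨hpos i, (hanti i).trans (hle_one i)⟩
    ⟨(hpos i).trans_le (hanti i), hle_one i⟩ (hanti i)
end

section
/- Barnsley–Elton theorem (averaged contractivity): let (X,d) be a complete separable metric space, and let f₁,…,f_N : X → X be Lipschitz maps with Lipschitz constants s₁,…,s_N > 0 and probabilities p₁,…,p_N > 0 with ∑ᵢ pᵢ = 1 satisfying the average contractivity condition ∑ᵢ pᵢ·log(sᵢ) < 0. Define the Markov operator T on Borel probability measures on X by T(ν) = ∑ᵢ pᵢ·(fᵢ)_*ν (pushforward). Then there exists a unique Borel probability measure μ on X with T(μ) = μ, and this μ is attractive: for every Borel probability measure ν on X, the iterates T^k(ν) converge weakly to μ as k → ∞. -/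
open MeasureTheory Filter

/-- The Markov operator of an iterated function system: `T(ν) = ∑ᵢ pᵢ·(fᵢ)_*ν`. -/
noncomputable def markovOp {X : Type*} [MeasurableSpace X]
    {N : ℕ} (f : Fin N → X → X) (p : Fin N → ℝ)
    (ν : Measure X) : Measure X :=
  ∑ i : Fin N, ENNReal.ofReal (p i) • ν.map (f i)

/-!
Since `∑ᵢ pᵢ log sᵢ` is the derivative at `q = 0` of `∑ᵢ pᵢ sᵢ ^ q`, for some `q > 0` the maps
contract `d ^ q` on average. Attach to a word `ω` the backward compositions
`f (ω 0) ∘ ⋯ ∘ f (ω (n - 1))`, and draw the letters of `ω` independently with law `p`. Averaging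
over the outermost letter shows that the `q`-th moment of the distance between two backward orbits
decays geometrically, so almost surely all backward orbits converge to one random point. Backward
and forward compositions of independent letters have the same law, so `T^k ν` converges weakly to
the law `μ` of that point. As `T` is weakly continuous, `μ` is invariant, and uniqueness follows
from attraction.
-/

open BoundedContinuousFunction
open scoped ENNReal NNReal Topology

section MarkovOp

variable {X Y : Type*} [MeasurableSpace X] [MeasurableSpace Y] {N : ℕ} {p : Fin N → ℝ}

lemma lintegral_markovOp {f : Fin N → X → X} (hf : ∀ i, Measurable (f i)) (ν : Measure X)
    {g : X → ℝ≥0∞} (hg : Measurable g) :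
    ∫⁻ x, g x ∂(markovOp f p ν) = ∑ i, ENNReal.ofReal (p i) * ∫⁻ x, g (f i x) ∂ν := by
  simp only [markovOp, lintegral_finsetSum_measure, lintegral_smul_measure, smul_eq_mul,
    lintegral_map hg (hf _)]

lemma integral_markovOp {E : Type*} [NormedAddCommGroup E] [NormedSpace ℝ E]
    (hp : ∀ i, 0 ≤ p i) {f : Fin N → X → X} (hf : ∀ i, Measurable (f i)) {ν : Measure X}
    {g : X → E} (hg : ∀ i, Integrable g (ν.map (f i))) :
    ∫ x, g x ∂(markovOp f p ν) = ∑ i, p i • ∫ x, g (f i x) ∂ν := by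
  rw [markovOp, integral_finsetSum_measure
    fun i _ => (hg i).smul_measure ENNReal.ofReal_ne_top]
  refine Finset.sum_congr rfl fun i _ => ?_
  rw [integral_smul_measure, ENNReal.toReal_ofReal (hp i),
    integral_map (hf i).aemeasurable (hg i).aestronglyMeasurable]

instance isFiniteMeasure_markovOp (f : Fin N → X → X) (ν : Measure X) [IsFiniteMeasure ν] :
    IsFiniteMeasure (markovOp f p ν) := by
  rw [markovOp]
  have (i : Fin N) : IsFiniteMeasure (ENNReal.ofReal (p i) • ν.map (f i)) :=
    Measure.smul_finite _ ENNReal.ofReal_ne_top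
  infer_instance

instance isFiniteMeasure_markovOp_iterate (f : Fin N → X → X) (ν : Measure X)
    [IsFiniteMeasure ν] (k : ℕ) : IsFiniteMeasure ((markovOp f p)^[k] ν) :=
  Function.Iterate.rec (fun ν : Measure X => IsFiniteMeasure ν) ‹_›
    (fun _ _ => isFiniteMeasure_markovOp f _) k

lemma map_markovOp_of_semiconj {g : Fin N → Y → Y} {f : Fin N → X → X} {Φ Ψ : Y → X}
    (hg : ∀ i, Measurable (g i)) (hf : ∀ i, Measurable (f i))
    (hΦ : Measurable Φ) (hΨ : Measurable Ψ) (h : ∀ i y, Φ (g i y) = f i (Ψ y)) (ν : Measure Y) :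
    (markovOp g p ν).map Φ = markovOp f p (ν.map Ψ) := by
  simp only [markovOp, Measure.map_finset_sum' hΦ.aemeasurable, Measure.map_smul,
    Measure.map_map hΦ (hg _), Measure.map_map (hf _) hΨ, Function.comp_def, h]

lemma markovOp_prodMap_id {f : Fin N → Y → Y} (hf : ∀ i, Measurable (f i))
    (ν : Measure X) [SFinite ν] (P : Measure Y) [SFinite P] :
    markovOp (fun i => Prod.map (id : X → X) (f i)) p (ν.prod P) = ν.prod (markovOp f p P) := by
  simp only [markovOp, ← Measure.sum_fintype, Measure.prod_sum_right, Measure.prod_smul_right,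
    ← Measure.map_prod_map ν P measurable_id (hf _), Measure.map_id]

end MarkovOp

section Attraction

variable {X : Type*} [TopologicalSpace X] [HasOuterApproxClosed X] [MeasurableSpace X]
  [BorelSpace X] {N : ℕ} {f : Fin N → X → X} {p : Fin N → ℝ}

lemma markovOp_eq_self_of_tendsto_integral_iterate (hp : ∀ i, 0 ≤ p i)
    (hf : ∀ i, Continuous (f i)) {μ ν : Measure X} [IsFiniteMeasure μ] [IsFiniteMeasure ν]
    (h : ∀ φ : X →ᵇ ℝ, Tendsto (fun k => ∫ x, φ x ∂((markovOp f p)^[k] ν)) atTop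
      (𝓝 (∫ x, φ x ∂μ))) :
    markovOp f p μ = μ := by
  refine ext_of_forall_integral_eq_of_IsFiniteMeasure fun φ => ?_
  have integral_eq (ρ : Measure X) [IsFiniteMeasure ρ] :
      ∫ x, φ x ∂(markovOp f p ρ) = ∑ i, p i • ∫ x, φ (f i x) ∂ρ :=
    integral_markovOp hp (fun i => (hf i).measurable) fun i => φ.integrable _
  have tendsto_left : Tendsto (fun k => ∫ x, φ x ∂((markovOp f p)^[k + 1] ν)) atTop
      (𝓝 (∫ x, φ x ∂(markovOp f p μ))) := by
    simp only [Function.iterate_succ_apply', integral_eq]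
    exact tendsto_finsetSum _ fun i _ => (h (φ.compContinuous ⟨f i, hf i⟩)).const_smul (p i)
  exact tendsto_nhds_unique tendsto_left ((h φ).comp (tendsto_add_atTop_nat 1))

lemma eq_of_markovOp_eq_self_of_tendsto_integral_iterate {μ μ' : Measure X} [IsFiniteMeasure μ]
    [IsFiniteMeasure μ'] (hμ' : markovOp f p μ' = μ')
    (h : ∀ φ : X →ᵇ ℝ, Tendsto (fun k => ∫ x, φ x ∂((markovOp f p)^[k] μ')) atTop
      (𝓝 (∫ x, φ x ∂μ))) :
    μ' = μ := by
  refine ext_of_forall_integral_eq_of_IsFiniteMeasure fun φ => ?_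
  have hφ := h φ
  simp only [Function.iterate_fixed hμ'] at hφ
  exact tendsto_nhds_unique tendsto_const_nhds hφ

end Attraction

section Bernoulli

variable {α : Type*}

/-- The sequence `i, ω 0, ω 1, …`, that is, the word `ω` with the letter `i` put in front. As `i`
varies, these are the inverse branches of the shift. -/
def prepend (i : α) (ω : ℕ → α) : ℕ → α
  | 0 => i
  | n + 1 => ω n

lemma preimage_prepend_pi_range (k : ℕ) (t : ℕ → Set α) :
    (fun z : α × (ℕ → α) => prepend z.1 z.2) ⁻¹' (Finset.range (k + 1) : Set ℕ).pi t =
      t 0 ×ˢ (Finset.range k : Set ℕ).pi fun n => t (n + 1) := by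
  ext z
  simp only [Set.mem_preimage, Set.mem_pi, Finset.coe_range, Set.mem_Iio, Set.mem_prod,
    Nat.forall_lt_succ_left, prepend]

variable [MeasurableSpace α]

lemma measurable_prepend : Measurable fun z : α × (ℕ → α) => prepend z.1 z.2 := by
  refine measurable_pi_lambda _ fun n => ?_
  cases n with
  | zero => exact measurable_fst
  | succ n => exact (measurable_pi_apply n).comp measurable_snd

lemma measurable_prepend_left (i : α) : Measurable (prepend i) :=
  measurable_prepend.comp measurable_prodMk_left

lemma map_prepend_prod_infinitePi (m : Measure α) [IsProbabilityMeasure m] :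
    (m.prod (Measure.infinitePi fun _ : ℕ => m)).map (fun z => prepend z.1 z.2) =
      Measure.infinitePi fun _ => m := by
  classical
  refine Measure.eq_infinitePi _ fun S t ht => ?_
  obtain ⟨k, hk⟩ : ∃ k, S ⊆ Finset.range (k + 1) :=
    ⟨S.sup id, Finset.subset_range_sup_succ S⟩
  let u (n : ℕ) : Set α := if n ∈ S then t n else Set.univ
  have hu (n) : MeasurableSet (u n) := by
    unfold u; split_ifs; exacts [ht n, .univ]
  have pi_eq : (S : Set ℕ).pi t = (Finset.range (k + 1) : Set ℕ).pi u := by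
    ext ω
    refine ⟨fun h n _ => ?_, fun h n hn => ?_⟩
    · by_cases hn : n ∈ S
      · simpa [u, hn] using h n hn
      · simp [u, hn]
    · simpa [u, Finset.mem_coe.1 hn] using h n (hk hn)
  have prod_eq : ∏ n ∈ Finset.range (k + 1), m (u n) = ∏ n ∈ S, m (t n) := by
    rw [← Finset.prod_subset hk fun n _ hn => by simp [u, hn]]
    exact Finset.prod_congr rfl fun n hn => by simp [u, hn]
  rw [pi_eq, Measure.map_apply measurable_prepend
      (.pi (Finset.countable_toSet _) fun n _ => hu n), preimage_prepend_pi_range,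
    Measure.prod_prod, Measure.infinitePi_pi _ fun n _ => hu (n + 1), ← prod_eq,
    Finset.prod_range_succ', mul_comm]

lemma exists_isProbabilityMeasure_markovOp_prepend_eq_self {N : ℕ} {p : Fin N → ℝ}
    (hp : ∀ i, 0 ≤ p i) (hpsum : ∑ i, p i = 1) :
    ∃ P : Measure (ℕ → Fin N), IsProbabilityMeasure P ∧ markovOp prepend p P = P := by
  let m : Measure (Fin N) := ∑ i, ENNReal.ofReal (p i) • Measure.dirac i
  have : IsProbabilityMeasure m := ⟨by
    simp [m, ← ENNReal.ofReal_sum_of_nonneg fun i _ => hp i, hpsum]⟩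
  let P := Measure.infinitePi fun _ : ℕ => m
  have prod_eq : m.prod P = ∑ i, ENNReal.ofReal (p i) • P.map (Prod.mk i) := by
    simp only [m, ← Measure.sum_fintype, Measure.prod_sum_left, Measure.prod_smul_left,
      Measure.dirac_prod]
  refine ⟨P, inferInstance, ?_⟩
  calc markovOp prepend p P = (m.prod P).map fun z => prepend z.1 z.2 := by
        simp only [prod_eq, Measure.map_finset_sum' measurable_prepend.aemeasurable,
          Measure.map_smul, Measure.map_map measurable_prepend measurable_prodMk_left]
        rfl
    _ = P := map_prepend_prod_infinitePi m

end Bernoulli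

section BackwardOrbit

variable {X : Type*} {N : ℕ}

/-- The backward orbit `f (ω 0) (f (ω 1) (⋯ (f (ω (n - 1)) x)))` of `x` along `ω`. Unlike the
forward orbit `f (ω (n - 1)) (⋯ (f (ω 0) x))`, it converges for almost every `ω` when the maps
contract on average. -/
def backwardOrbit (f : Fin N → X → X) (x : X) (n : ℕ) (ω : ℕ → Fin N) : X :=
  (List.ofFn fun k : Fin n => ω k).foldr f x

@[simp]
lemma backwardOrbit_zero (f : Fin N → X → X) (x : X) (ω : ℕ → Fin N) :
    backwardOrbit f x 0 ω = x := by
  simp [backwardOrbit]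

lemma backwardOrbit_succ_prepend (f : Fin N → X → X) (x : X) (n : ℕ) (i : Fin N)
    (ω : ℕ → Fin N) :
    backwardOrbit f x (n + 1) (prepend i ω) = f i (backwardOrbit f x n ω) := by
  simp [backwardOrbit, List.ofFn_succ, prepend]

lemma stronglyMeasurable_backwardOrbit [TopologicalSpace X] (f : Fin N → X → X) (x : X) (n : ℕ) :
    StronglyMeasurable (backwardOrbit f x n) :=
  (StronglyMeasurable.of_discrete (f := fun w : Fin n → Fin N => (List.ofFn w).foldr f x))
    |>.comp_measurable (by fun_prop)

lemma measurable_uncurry_backwardOrbit [MeasurableSpace X] {f : Fin N → X → X}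
    (hf : ∀ i, Measurable (f i)) (n : ℕ) :
    Measurable fun z : X × (ℕ → Fin N) => backwardOrbit f z.1 n z.2 := by
  have measurable_foldr (l : List (Fin N)) : Measurable fun x => l.foldr f x := by
    induction l with
    | nil => exact measurable_id
    | cons i l ih => exact (hf i).comp ih
  have : Measurable fun z : X × (Fin n → Fin N) => (List.ofFn z.2).foldr f z.1 :=
    measurable_from_prod_countable_left fun w => measurable_foldr (List.ofFn w)
  exact this.comp
    (by fun_prop : Measurable fun z : X × (ℕ → Fin N) => (z.1, fun k : Fin n => z.2 k))

lemma markovOp_iterate_eq_map_backwardOrbit [MeasurableSpace X] {f : Fin N → X → X}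
    (hf : ∀ i, Measurable (f i)) {p : Fin N → ℝ} {P : Measure (ℕ → Fin N)}
    [IsProbabilityMeasure P] (hP : markovOp prepend p P = P) (ν : Measure X) [SFinite ν] (k : ℕ) :
    (markovOp f p)^[k] ν = (ν.prod P).map fun z => backwardOrbit f z.1 k z.2 := by
  induction k with
  | zero => simp
  | succ k ih =>
    have invariant : markovOp (fun i => Prod.map (id : X → X) (prepend i)) p (ν.prod P) =
        ν.prod P := by
      rw [markovOp_prodMap_id measurable_prepend_left, hP]
    rw [Function.iterate_succ_apply', ih, ← map_markovOp_of_semiconj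
      (fun i => measurable_id.prodMap (measurable_prepend_left i)) hf
      (measurable_uncurry_backwardOrbit hf (k + 1)) (measurable_uncurry_backwardOrbit hf k)
      (fun i z => backwardOrbit_succ_prepend f z.1 k i z.2), invariant]

end BackwardOrbit

section AverageContraction

/-- The iterated function system `f` with probabilities `p` contracts the `q`-th power of the
distance by the factor `r` on average. -/
def ContractsOnAverage {ι X : Type*} [Fintype ι] [PseudoEMetricSpace X] (f : ι → X → X)
    (p : ι → ℝ) (q : ℝ) (r : ℝ≥0∞) : Prop :=
  ∀ x y, ∑ i, ENNReal.ofReal (p i) * edist (f i x) (f i y) ^ q ≤ r * edist x y ^ q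

lemma eventually_sum_mul_rpow_lt_sum {ι : Type*} {t : Finset ι} {s p : ι → ℝ}
    (hs : ∀ i ∈ t, 0 < s i) (havg : ∑ i ∈ t, p i * Real.log (s i) < 0) :
    ∀ᶠ q in 𝓝[>] (0 : ℝ), ∑ i ∈ t, p i * s i ^ q < ∑ i ∈ t, p i := by
  have hasDerivAt : HasDerivAt (fun q : ℝ => ∑ i ∈ t, p i * s i ^ q)
      (∑ i ∈ t, p i * Real.log (s i)) 0 := by
    refine HasDerivAt.fun_sum fun i hi => ?_
    simpa using (Real.hasStrictDerivAt_const_rpow (hs i hi) 0).hasDerivAt.const_mul (p i)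
  filter_upwards [hasDerivAt.hasDerivWithinAt.limsup_slope_le' Set.self_notMem_Ioi havg,
    self_mem_nhdsWithin] with q slope_neg hq
  rw [slope_def_field, sub_zero, div_lt_iff₀ hq, zero_mul, sub_neg] at slope_neg
  simpa using slope_neg

lemma contractsOnAverage_of_lipschitzWith {ι X : Type*} [Fintype ι] [PseudoEMetricSpace X]
    {f : ι → X → X} {K : ι → ℝ≥0} (hf : ∀ i, LipschitzWith (K i) (f i)) (p : ι → ℝ) {q : ℝ}
    (hq : 0 ≤ q) :
    ContractsOnAverage f p q (∑ i, ENNReal.ofReal (p i) * (K i : ℝ≥0∞) ^ q) := by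
  intro x y
  rw [Finset.sum_mul]
  refine Finset.sum_le_sum fun i _ => ?_
  rw [mul_assoc, ← ENNReal.mul_rpow_of_nonneg _ _ hq]
  gcongr
  exact hf i x y

lemma exists_contractsOnAverage_of_sum_mul_log_neg {ι X : Type*} [Fintype ι]
    [PseudoEMetricSpace X] {f : ι → X → X} {s p : ι → ℝ} (hs : ∀ i, 0 < s i)
    (hf : ∀ i, LipschitzWith (s i).toNNReal (f i)) (hp : ∀ i, 0 ≤ p i) (hpsum : ∑ i, p i = 1)
    (havg : ∑ i, p i * Real.log (s i) < 0) :
    ∃ q : ℝ, 0 < q ∧ ∃ r < 1, ContractsOnAverage f p q r := by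
  obtain ⟨q, hsum, hq⟩ := ((eventually_sum_mul_rpow_lt_sum (fun i _ => hs i) havg).and
    self_mem_nhdsWithin).exists
  refine ⟨q, hq, _, ?_, contractsOnAverage_of_lipschitzWith hf p (le_of_lt hq)⟩
  calc ∑ i, ENNReal.ofReal (p i) * ((s i).toNNReal : ℝ≥0∞) ^ q
      = ENNReal.ofReal (∑ i, p i * s i ^ q) := by
        rw [ENNReal.ofReal_sum_of_nonneg fun i _ =>
          mul_nonneg (hp i) (Real.rpow_nonneg (hs i).le q)]
        refine Finset.sum_congr rfl fun i _ => ?_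
        rw [ENNReal.ofReal_mul (hp i), ← ENNReal.ofReal_rpow_of_pos (hs i)]
        rfl
    _ < 1 := ENNReal.ofReal_lt_one.2 (hpsum ▸ hsum)

lemma ae_tsum_ne_top_of_lintegral_rpow_le {Ω : Type*} [MeasurableSpace Ω] {P : Measure Ω}
    {a : ℕ → Ω → ℝ≥0∞} (ha : ∀ n, AEMeasurable (a n) P) {q : ℝ} (hq : 0 < q) {C r : ℝ≥0∞}
    (hC : C ≠ ∞) (hr : r < 1) (h : ∀ n, ∫⁻ ω, a n ω ^ q ∂P ≤ C * r ^ n) :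
    ∀ᵐ ω ∂P, ∑' n, a n ω ≠ ∞ := by
  obtain ⟨t, hrt, ht⟩ := exists_between hr
  have ht0 : t ≠ 0 := (pos_of_gt hrt).ne'
  have htop : t ≠ ∞ := ht.ne_top
  have hmeas (n : ℕ) : AEMeasurable (fun ω => t⁻¹ ^ n * a n ω ^ q) P :=
    ((ha n).pow_const q).const_mul _
  have weighted_moments : ∫⁻ ω, ∑' n, t⁻¹ ^ n * a n ω ^ q ∂P ≠ ∞ := by
    have term_le (n : ℕ) : ∫⁻ ω, t⁻¹ ^ n * a n ω ^ q ∂P ≤ C * (t⁻¹ * r) ^ n := by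
      rw [lintegral_const_mul'' _ ((ha n).pow_const q), mul_pow, mul_left_comm]
      gcongr
      exact h n
    have ratio_lt : t⁻¹ * r < 1 := by
      rw [mul_comm, ← div_eq_mul_inv]
      exact ENNReal.div_lt_of_lt_mul (by rwa [one_mul])
    rw [lintegral_tsum hmeas]
    refine ne_top_of_le_ne_top ?_ (ENNReal.tsum_le_tsum term_le)
    rw [ENNReal.tsum_mul_left, ENNReal.tsum_geometric]
    exact ENNReal.mul_ne_top hC (ENNReal.inv_ne_top.2 (tsub_pos_of_lt ratio_lt).ne')
  filter_upwards [ae_lt_top' (AEMeasurable.tsum hmeas) weighted_moments] with ω hω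
  set S := ∑' n, t⁻¹ ^ n * a n ω ^ q
  have geometric_bound (n : ℕ) : a n ω ≤ S ^ q⁻¹ * (t ^ q⁻¹) ^ n := by
    have : a n ω ^ q ≤ S * t ^ n := by
      rw [← ENNReal.div_le_iff (pow_ne_zero n ht0) (ENNReal.pow_ne_top htop), div_eq_mul_inv,
        ENNReal.inv_pow, mul_comm]
      exact ENNReal.le_tsum n
    calc a n ω ≤ (S * t ^ n) ^ q⁻¹ := (ENNReal.le_rpow_inv_iff hq).2 this
      _ = S ^ q⁻¹ * (t ^ q⁻¹) ^ n := by
        rw [ENNReal.mul_rpow_of_nonneg _ _ (inv_nonneg.2 hq.le), ← ENNReal.rpow_natCast_mul,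
          ← ENNReal.rpow_mul_natCast, mul_comm q⁻¹]
  refine ne_top_of_le_ne_top ?_ (ENNReal.tsum_le_tsum geometric_bound)
  rw [ENNReal.tsum_mul_left, ENNReal.tsum_geometric]
  exact ENNReal.mul_ne_top (ENNReal.rpow_ne_top_of_nonneg (inv_nonneg.2 hq.le) hω.ne)
    (ENNReal.inv_ne_top.2 (tsub_pos_of_lt (ENNReal.rpow_lt_one ht (inv_pos.2 hq))).ne')

variable {X : Type*} {N : ℕ} {f : Fin N → X → X} {p : Fin N → ℝ} {q : ℝ} {r : ℝ≥0∞}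
  {P : Measure (ℕ → Fin N)}

lemma ContractsOnAverage.lintegral_edist_rpow_le [PseudoEMetricSpace X]
    (hf : ContractsOnAverage f p q r) (hP : markovOp prepend p P = P)
    {u v : ℕ → (ℕ → Fin N) → X} (hu : ∀ n, StronglyMeasurable (u n))
    (hv : ∀ n, StronglyMeasurable (v n))
    (hu' : ∀ n i ω, u (n + 1) (prepend i ω) = f i (u n ω))
    (hv' : ∀ n i ω, v (n + 1) (prepend i ω) = f i (v n ω)) (n : ℕ) :
    ∫⁻ ω, edist (u n ω) (v n ω) ^ q ∂P ≤ (∫⁻ ω, edist (u 0 ω) (v 0 ω) ^ q ∂P) * r ^ n := by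
  have hmeas (n : ℕ) : Measurable fun ω => edist (u n ω) (v n ω) ^ q :=
    ((hu n).edist (hv n)).measurable.pow_const q
  have hstep (n : ℕ) (i : Fin N) : Measurable fun ω => edist (f i (u n ω)) (f i (v n ω)) ^ q := by
    simpa only [Function.comp_def, hu', hv'] using (hmeas (n + 1)).comp (measurable_prepend_left i)
  induction n with
  | zero => simp
  | succ n ih =>
    calc ∫⁻ ω, edist (u (n + 1) ω) (v (n + 1) ω) ^ q ∂P
        = ∫⁻ ω, edist (u (n + 1) ω) (v (n + 1) ω) ^ q ∂(markovOp prepend p P) := by rw [hP]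
      _ = ∑ i, ENNReal.ofReal (p i) * ∫⁻ ω, edist (f i (u n ω)) (f i (v n ω)) ^ q ∂P := by
        simp only [lintegral_markovOp measurable_prepend_left P (hmeas (n + 1)), hu', hv']
      _ = ∫⁻ ω, ∑ i, ENNReal.ofReal (p i) * edist (f i (u n ω)) (f i (v n ω)) ^ q ∂P := by
        rw [lintegral_finsetSum _ fun i _ => (hstep n i).const_mul _]
        simp only [lintegral_const_mul _ (hstep n _)]
      _ ≤ ∫⁻ ω, r * edist (u n ω) (v n ω) ^ q ∂P := lintegral_mono fun ω => hf _ _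
      _ = r * ∫⁻ ω, edist (u n ω) (v n ω) ^ q ∂P := lintegral_const_mul _ (hmeas n)
      _ ≤ r * ((∫⁻ ω, edist (u 0 ω) (v 0 ω) ^ q ∂P) * r ^ n) := by gcongr
      _ = (∫⁻ ω, edist (u 0 ω) (v 0 ω) ^ q ∂P) * r ^ (n + 1) := by ring

lemma ContractsOnAverage.ae_tsum_edist_ne_top [PseudoEMetricSpace X]
    (hf : ContractsOnAverage f p q r) (hq : 0 < q) (hr : r < 1) (hP : markovOp prepend p P = P)
    {u v : ℕ → (ℕ → Fin N) → X} (hu : ∀ n, StronglyMeasurable (u n))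
    (hv : ∀ n, StronglyMeasurable (v n))
    (hu' : ∀ n i ω, u (n + 1) (prepend i ω) = f i (u n ω))
    (hv' : ∀ n i ω, v (n + 1) (prepend i ω) = f i (v n ω))
    (h0 : ∫⁻ ω, edist (u 0 ω) (v 0 ω) ^ q ∂P ≠ ∞) :
    ∀ᵐ ω ∂P, ∑' n, edist (u n ω) (v n ω) ≠ ∞ :=
  ae_tsum_ne_top_of_lintegral_rpow_le
    (fun n => ((hu n).edist (hv n)).measurable.aemeasurable) hq h0 hr
    (hf.lintegral_edist_rpow_le hP hu hv hu' hv')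

variable [PseudoMetricSpace X] [IsFiniteMeasure P]

lemma ContractsOnAverage.ae_cauchySeq_backwardOrbit
    (hf : ContractsOnAverage f p q r) (hq : 0 < q) (hr : r < 1) (hP : markovOp prepend p P = P)
    (x : X) : ∀ᵐ ω ∂P, CauchySeq fun n => backwardOrbit f x n ω := by
  have first_step : ∫⁻ ω, edist (backwardOrbit f x 0 ω) (backwardOrbit f x 1 ω) ^ q ∂P ≠ ∞ := by
    have le_sum (ω : ℕ → Fin N) :
        edist (backwardOrbit f x 0 ω) (backwardOrbit f x 1 ω) ^ q ≤ ∑ i, edist x (f i x) ^ q := by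
      simpa [backwardOrbit] using Finset.single_le_sum (f := fun i => edist x (f i x) ^ q)
        (fun _ _ => zero_le) (Finset.mem_univ (ω 0))
    refine ne_top_of_le_ne_top ?_ (lintegral_mono le_sum)
    rw [lintegral_const]
    exact ENNReal.mul_ne_top (ENNReal.sum_ne_top.2 fun i _ =>
      ENNReal.rpow_ne_top_of_nonneg hq.le (edist_ne_top _ _)) (measure_ne_top P _)
  filter_upwards [hf.ae_tsum_edist_ne_top hq hr hP
    (fun n => stronglyMeasurable_backwardOrbit f x n)
    (fun n => stronglyMeasurable_backwardOrbit f x (n + 1)) (backwardOrbit_succ_prepend f x)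
    (fun n => backwardOrbit_succ_prepend f x (n + 1)) first_step] with ω hω
  exact cauchySeq_of_edist_le_of_tsum_ne_top _ (fun _ => le_rfl) hω

lemma ContractsOnAverage.ae_tendsto_dist_backwardOrbit
    (hf : ContractsOnAverage f p q r) (hq : 0 < q) (hr : r < 1) (hP : markovOp prepend p P = P)
    (x y : X) :
    ∀ᵐ ω ∂P, Tendsto (fun n => dist (backwardOrbit f x n ω) (backwardOrbit f y n ω)) atTop
      (𝓝 0) := by
  have start : ∫⁻ ω, edist (backwardOrbit f x 0 ω) (backwardOrbit f y 0 ω) ^ q ∂P ≠ ∞ := by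
    simp only [backwardOrbit_zero, lintegral_const]
    exact ENNReal.mul_ne_top (ENNReal.rpow_ne_top_of_nonneg hq.le (edist_ne_top _ _))
      (measure_ne_top P _)
  filter_upwards [hf.ae_tsum_edist_ne_top hq hr hP (stronglyMeasurable_backwardOrbit f x)
    (stronglyMeasurable_backwardOrbit f y) (backwardOrbit_succ_prepend f x)
    (backwardOrbit_succ_prepend f y) start] with ω hω
  simpa only [dist_edist, Function.comp_def, ENNReal.toReal_zero] using
    (ENNReal.tendsto_toReal ENNReal.zero_ne_top).comp
      (ENNReal.tendsto_atTop_zero_of_tsum_ne_top hω)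

lemma ContractsOnAverage.exists_ae_tendsto_backwardOrbit [CompleteSpace X] [Nonempty X]
    (hf : ContractsOnAverage f p q r) (hq : 0 < q) (hr : r < 1)
    (hP : markovOp prepend p P = P) :
    ∃ W : (ℕ → Fin N) → X, StronglyMeasurable W ∧
      ∀ x, ∀ᵐ ω ∂P, Tendsto (fun n => backwardOrbit f x n ω) atTop (𝓝 (W ω)) := by
  obtain ⟨x₀⟩ := ‹Nonempty X›
  obtain ⟨W, hW, tendsto_W⟩ := exists_stronglyMeasurable_limit_of_tendsto_ae
    (fun n => (stronglyMeasurable_backwardOrbit f x₀ n).aestronglyMeasurable)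
    ((hf.ae_cauchySeq_backwardOrbit hq hr hP x₀).mono fun _ => cauchySeq_tendsto_of_complete)
  refine ⟨W, hW, fun x => ?_⟩
  filter_upwards [tendsto_W, hf.ae_tendsto_dist_backwardOrbit hq hr hP x₀ x] with ω h h'
  exact h.congr_dist h'

end AverageContraction

lemma tendsto_integral_markovOp_iterate {X : Type*} [TopologicalSpace X] [MeasurableSpace X]
    [OpensMeasurableSpace X] {N : ℕ} {f : Fin N → X → X} (hf : ∀ i, Measurable (f i))
    {p : Fin N → ℝ} {P : Measure (ℕ → Fin N)} [IsProbabilityMeasure P]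
    (hP : markovOp prepend p P = P) {W : (ℕ → Fin N) → X} (hW : Measurable W)
    (hlim : ∀ x, ∀ᵐ ω ∂P, Tendsto (fun n => backwardOrbit f x n ω) atTop (𝓝 (W ω)))
    (ν : Measure X) [IsProbabilityMeasure ν] (φ : X →ᵇ ℝ) :
    Tendsto (fun k => ∫ x, φ x ∂((markovOp f p)^[k] ν)) atTop (𝓝 (∫ x, φ x ∂(P.map W))) := by
  have hφ : StronglyMeasurable φ := φ.continuous.measurable.stronglyMeasurable
  have hmeas (k : ℕ) : StronglyMeasurable fun z : X × (ℕ → Fin N) =>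
      φ (backwardOrbit f z.1 k z.2) :=
    hφ.comp_measurable (measurable_uncurry_backwardOrbit hf k)
  have integral_iterate (k : ℕ) : ∫ x, φ x ∂((markovOp f p)^[k] ν) =
      ∫ x, ∫ ω, φ (backwardOrbit f x k ω) ∂P ∂ν := by
    rw [markovOp_iterate_eq_map_backwardOrbit hf hP,
      integral_map (measurable_uncurry_backwardOrbit hf k).aemeasurable hφ.aestronglyMeasurable]
    exact integral_prod _ (.of_bound (hmeas k).aestronglyMeasurable ‖φ‖
      (.of_forall fun _ => φ.norm_coe_le_norm _))
  have integral_limit : ∫ x, φ x ∂(P.map W) = ∫ _ : X, ∫ ω, φ (W ω) ∂P ∂ν := by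
    rw [integral_map hW.aemeasurable hφ.aestronglyMeasurable]
    simp
  have tendsto_pointwise (x : X) : Tendsto (fun k => ∫ ω, φ (backwardOrbit f x k ω) ∂P) atTop
      (𝓝 (∫ ω, φ (W ω) ∂P)) := by
    refine tendsto_integral_of_dominated_convergence (fun _ => ‖φ‖)
      (fun k => ((hmeas k).comp_measurable measurable_prodMk_left).aestronglyMeasurable)
      (integrable_const _) (fun k => .of_forall fun ω => φ.norm_coe_le_norm _) ?_
    filter_upwards [hlim x] with ω hω using (φ.continuous.tendsto _).comp hω
  simp only [integral_iterate, integral_limit]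
  refine tendsto_integral_of_dominated_convergence (fun _ => ‖φ‖)
    (fun k => (hmeas k).integral_prod_right.aestronglyMeasurable) (integrable_const _)
    (fun k => .of_forall fun x => ?_) (.of_forall tendsto_pointwise)
  simpa using norm_integral_le_of_norm_le_const (μ := P)
    (.of_forall fun ω => φ.norm_coe_le_norm (backwardOrbit f x k ω))

theorem barnsley_elton_general
    {X : Type*} [PseudoMetricSpace X] [CompleteSpace X] [Nonempty X]
    [MeasurableSpace X] [BorelSpace X]
    {N : ℕ} {f : Fin N → X → X} {p : Fin N → ℝ}
    (hp : ∀ i, 0 ≤ p i) (hpsum : ∑ i, p i = 1) (hcont : ∀ i, Continuous (f i))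
    {q : ℝ} {r : ℝ≥0∞} (hq : 0 < q) (hr : r < 1) (hf : ContractsOnAverage f p q r) :
    ∃ μ : Measure X, IsProbabilityMeasure μ ∧ markovOp f p μ = μ ∧
      (∀ μ' : Measure X, IsProbabilityMeasure μ' → markovOp f p μ' = μ' → μ' = μ) ∧
      (∀ ν : Measure X, IsProbabilityMeasure ν →
        ∀ φ : BoundedContinuousFunction X ℝ,
          Tendsto (fun k : ℕ => ∫ x, φ x ∂((markovOp f p)^[k] ν)) atTop
            (𝓝 (∫ x, φ x ∂μ))) := by
  obtain ⟨P, _, hP⟩ := exists_isProbabilityMeasure_markovOp_prepend_eq_self hp hpsum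
  obtain ⟨W, hW, hlim⟩ := hf.exists_ae_tendsto_backwardOrbit hq hr hP
  have : IsProbabilityMeasure (P.map W) :=
    Measure.isProbabilityMeasure_map hW.measurable.aemeasurable
  have attractive (ν : Measure X) (_ : IsProbabilityMeasure ν) (φ : X →ᵇ ℝ) :=
    tendsto_integral_markovOp_iterate (fun i => (hcont i).measurable) hP hW.measurable hlim ν φ
  exact ⟨P.map W, this,
    markovOp_eq_self_of_tendsto_integral_iterate hp hcont (attractive (P.map W) this),
    fun μ' h hμ' => eq_of_markovOp_eq_self_of_tendsto_integral_iterate hμ' (attractive μ' h),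
    attractive⟩

/-- **Barnsley–Elton.** On a (nonempty) complete separable
metric space, an IFS of Lipschitz maps `fᵢ` with constants `sᵢ > 0` and
probabilities `pᵢ > 0`, `∑ pᵢ = 1`, satisfying the average contractivity
condition `∑ᵢ pᵢ·log sᵢ < 0`, has a unique invariant Borel probability
measure, and this measure is attractive: the iterates of the Markov operator
applied to any Borel probability measure converge weakly to it. -/
theorem barnsley_elton
    {X : Type*} [MetricSpace X] [CompleteSpace X]
    [TopologicalSpace.SeparableSpace X] [Nonempty X]
    [MeasurableSpace X] [BorelSpace X]
    {N : ℕ} (f : Fin N → X → X) (s : Fin N → ℝ) (p : Fin N → ℝ)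
    (hs : ∀ i, 0 < s i)
    (hlip : ∀ i, ∀ x y : X, dist (f i x) (f i y) ≤ s i * dist x y)
    (hp : ∀ i, 0 < p i) (hpsum : ∑ i : Fin N, p i = 1)
    (havg : ∑ i : Fin N, p i * Real.log (s i) < 0) :
    ∃ μ : Measure X, IsProbabilityMeasure μ ∧ markovOp f p μ = μ ∧
      (∀ μ' : Measure X, IsProbabilityMeasure μ' → markovOp f p μ' = μ' → μ' = μ) ∧
      (∀ ν : Measure X, IsProbabilityMeasure ν →
        ∀ φ : BoundedContinuousFunction X ℝ,
          Tendsto (fun k : ℕ => ∫ x, φ x ∂((markovOp f p)^[k] ν)) atTop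
            (nhds (∫ x, φ x ∂μ))) := by
  obtain ⟨q, hq, r, hr, hcontr⟩ := exists_contractsOnAverage_of_sum_mul_log_neg hs
    (fun i => .of_dist_le' (hlip i)) (fun i => (hp i).le) hpsum havg
  have hcont (i) : Continuous (f i) := (LipschitzWith.of_dist_le' (hlip i)).continuous
  exact barnsley_elton_general (fun i => (hp i).le) hpsum hcont hq hr hcontr
end
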